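/- arXiv:1902.04480 — 2 statements merged into one kernel-verified Lean document; each statement's English description precedes it below -/
import Mathlib

section
/- Let m ≥ 2 be an integer, D : [0,1] → ℝ continuous, and E ∈ ℝ^{1×n} a row vector. For all positive constants c₁, …, c_{m−1} there exists c_m^* > 0 such that for every c_m ≥ c_m^* there exist constants Υ > 0 and λ > 0, depending only on q, M, B, P, Q, D, E, c₁, …, c_m, with the following property: whenever (w, X) is a classical solution of the target PDE–ODE subsystem and y₁, …, y_m : [0,∞) → ℝ are differentiable functions satisfying y₁(t) = w(1,t), y₂(t) = w_t(1,t) + c₁·y₁(t), ẏ_i(t) = y_{i+1}(t) − y_{i−1}(t) − c_i·y_i(t) for 2 ≤ i ≤ m−1, and ẏ_m(t) = −y_{m−1}(t) − c_m·y_m(t) + E·X(t) − ∫₀¹ D(σ)·w(σ,t) dσ, then the quantity Ω(t) = ‖w(·,t)‖² + ‖w_x(·,t)‖² + |X(t)|² + Σ_{i=1}^{m} y_i(t)² satisfies Ω(t) ≤ Υ·Ω(0)·e^{−λt} for all t ≥ 0. -/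
open scoped Matrix
open Set

/-- `Ω(t) = ‖w(·,t)‖² + ‖w_x(·,t)‖² + |X(t)|² + Σ_{i=1}^m y_i(t)²`. -/
noncomputable def Omega10 (n m : ℕ) (w : ℝ → ℝ → ℝ) (X : ℝ → Fin n → ℝ)
    (y : ℕ → ℝ → ℝ) (t : ℝ) : ℝ :=
  (∫ x in (0:ℝ)..1, (w x t) ^ 2)
  + (∫ x in (0:ℝ)..1, (deriv (fun s => w s t) x) ^ 2)
  + (∑ i, (X t i) ^ 2)
  + ∑ i ∈ Finset.Icc 1 m, (y i t) ^ 2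

theorem aux_sqint {f : ℝ → ℝ} (hf : ContinuousOn f (Icc (0:ℝ) 1)) {a b : ℝ} (ha : 0 ≤ a)
    (hab : a ≤ b) (hb : b ≤ 1) : (∫ x in a..b, f x) ^ 2 ≤ ∫ x in (0:ℝ)..1, (f x) ^ 2 := by
  have hsub : Icc a b ⊆ Icc (0:ℝ) 1 := Icc_subset_Icc ha hb
  have hf' : ContinuousOn f (Icc a b) := hf.mono hsub
  have i1 : IntervalIntegrable f MeasureTheory.volume a b :=
    ContinuousOn.intervalIntegrable_of_Icc hab hf'
  have i2 : IntervalIntegrable (fun x => f x ^ 2) MeasureTheory.volume a b :=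
    ContinuousOn.intervalIntegrable_of_Icc hab (hf'.pow 2)
  have i3 : IntervalIntegrable (fun x => f x ^ 2) MeasureTheory.volume 0 1 :=
    ContinuousOn.intervalIntegrable_of_Icc zero_le_one (hf.pow 2)
  have h1 : ∫ x in a..b, f x ^ 2 ≤ ∫ x in (0:ℝ)..1, (f x) ^ 2 := by
    apply intervalIntegral.integral_mono_interval ha hab hb _ i3
    exact Filter.Eventually.of_forall fun x => sq_nonneg (f x)
  set I := ∫ x in a..b, f x with hI
  have h2 : ∫ x in a..b, 2 * I * f x ≤ ∫ x in a..b, (I ^ 2 + f x ^ 2) := by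
    apply intervalIntegral.integral_mono_on hab (i1.const_mul _)
      ((intervalIntegrable_const (c := I ^ 2)).add i2)
    intro x _
    nlinarith [sq_nonneg (I - f x)]
  rw [intervalIntegral.integral_const_mul, intervalIntegral.integral_add
    intervalIntegrable_const i2, intervalIntegral.integral_const, ← hI, smul_eq_mul] at h2
  nlinarith [mul_nonneg (sq_nonneg I) (by linarith : (0:ℝ) ≤ 1 - (b - a))]

/-- Agmon/trace type inequality -/
theorem aux_trace {f f' : ℝ → ℝ} (hf : ∀ x, HasDerivAt f (f' x) x) (hf' : Continuous f')
    {z : ℝ} (hz : z ∈ Icc (0:ℝ) 1) :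
    f z ^ 2 ≤ 2 * (∫ x in (0:ℝ)..1, f x ^ 2) + 2 * ∫ x in (0:ℝ)..1, f' x ^ 2 := by
  have hfc : Continuous f := continuous_iff_continuousAt.2 fun x => (hf x).continuousAt
  have key : ∀ x ∈ Icc (0:ℝ) 1, (f z - f x) ^ 2 ≤ ∫ x in (0:ℝ)..1, f' x ^ 2 := by
    intro x hx
    rcases le_total x z with h | h
    · rw [← intervalIntegral.integral_eq_sub_of_hasDerivAt (fun y _ => hf y)
        (hf'.intervalIntegrable _ _)]
      exact aux_sqint hf'.continuousOn hx.1 h hz.2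
    · rw [← neg_sq, neg_sub, ← intervalIntegral.integral_eq_sub_of_hasDerivAt (fun y _ => hf y)
        (hf'.intervalIntegrable _ _)]
      exact aux_sqint hf'.continuousOn hz.1 h hx.2
  set J := ∫ x in (0:ℝ)..1, f' x ^ 2
  have h2 : ∫ x in (0:ℝ)..1, f z ^ 2 ≤ ∫ x in (0:ℝ)..1, (2 * f x ^ 2 + 2 * J) := by
    apply intervalIntegral.integral_mono_on zero_le_one intervalIntegrable_const
      (Continuous.intervalIntegrable (by fun_prop) _ _)
    intro x hx
    nlinarith [key x hx, sq_nonneg (f z - 2 * f x)]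
  rw [intervalIntegral.integral_add (Continuous.intervalIntegrable (by fun_prop) _ _)
    intervalIntegrable_const, intervalIntegral.integral_const_mul] at h2
  simpa using h2

theorem aux_poincare {f f' : ℝ → ℝ} (hf : ∀ x, HasDerivAt f (f' x) x) (hf' : Continuous f')
    (h0 : f 0 = 0) :
    (∫ x in (0:ℝ)..1, f x ^ 2) ≤ ∫ x in (0:ℝ)..1, f' x ^ 2 := by
  have hfc : Continuous f := continuous_iff_continuousAt.2 fun x => (hf x).continuousAt
  have h2 : ∫ x in (0:ℝ)..1, f x ^ 2 ≤ ∫ x in (0:ℝ)..1, (∫ x in (0:ℝ)..1, f' x ^ 2) := by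
    apply intervalIntegral.integral_mono_on zero_le_one
      (Continuous.intervalIntegrable (by fun_prop) _ _) intervalIntegrable_const
    intro x hx
    have := aux_sqint hf'.continuousOn le_rfl hx.1 hx.2
    rw [intervalIntegral.integral_eq_sub_of_hasDerivAt (fun y _ => hf y)
        (hf'.intervalIntegrable _ _), h0, sub_zero] at this
    exact this
  simpa using h2

theorem aux_leibniz {g g' : ℝ → ℝ → ℝ} (hg : Continuous (Function.uncurry g))
    (hg' : Continuous (Function.uncurry g'))
    (h : ∀ x t, HasDerivAt (fun s => g x s) (g' x t) t) (t : ℝ) :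
    HasDerivAt (fun s => ∫ x in (0:ℝ)..1, g x s) (∫ x in (0:ℝ)..1, g' x t) t := by
  obtain ⟨C, hC⟩ := (isCompact_Icc.prod (isCompact_Icc : IsCompact (Icc (t-1) (t+1)))
    : IsCompact (Icc (0:ℝ) 1 ×ˢ Icc (t-1) (t+1))).exists_bound_of_continuousOn hg'.continuousOn
  have c1 : ∀ s, Continuous fun x => g x s := fun s =>
    hg.comp (by fun_prop : Continuous fun x : ℝ => (x, s))
  have c2 : ∀ s, Continuous fun x => g' x s := fun s =>
    hg'.comp (by fun_prop : Continuous fun x : ℝ => (x, s))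
  refine (intervalIntegral.hasDerivAt_integral_of_dominated_loc_of_deriv_le
    (F := fun s x => g x s) (F' := fun s x => g' x s) (bound := fun _ => C)
    (Icc_mem_nhds (by linarith) (by linarith) : Icc (t-1) (t+1) ∈ nhds t)
    (Filter.Eventually.of_forall fun s => (c1 s).aestronglyMeasurable)
    ((c1 t).intervalIntegrable _ _) (c2 t).aestronglyMeasurable ?_ intervalIntegrable_const ?_).2
  · refine Filter.Eventually.of_forall fun x hx s hs => ?_
    rw [uIoc_of_le zero_le_one] at hx
    exact hC (x, s) ⟨⟨hx.1.le, hx.2⟩, hs⟩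
  · exact Filter.Eventually.of_forall fun x hx s hs => h x s

theorem aux_app {G : ℝ × ℝ → (ℝ × ℝ →L[ℝ] ℝ)} {G' : ℝ × ℝ →L[ℝ] (ℝ × ℝ →L[ℝ] ℝ)} {p : ℝ × ℝ}
    (h : HasFDerivAt G G' p) {γ : ℝ → ℝ × ℝ} {v : ℝ × ℝ} {s : ℝ} (hγ : HasDerivAt γ v s)
    (hp : γ s = p) (u : ℝ × ℝ) : HasDerivAt (fun s => G (γ s) u) (G' v u) s := by
  subst hp
  have h1 : HasDerivAt (fun s => G (γ s)) (G' v) s := h.comp_hasDerivAt s hγ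
  have := h1.clm_apply (hasDerivAt_const s u)
  refine this.congr_deriv ?_
  simp

/-- partial derivatives -/
theorem aux_partials {w : ℝ → ℝ → ℝ} (hw : ContDiff ℝ (⊤ : ℕ∞) (Function.uncurry w)) :
    ∃ wx wt : ℝ → ℝ → ℝ, ContDiff ℝ (⊤ : ℕ∞) (Function.uncurry wx) ∧
      ContDiff ℝ (⊤ : ℕ∞) (Function.uncurry wt) ∧
      (∀ x t, HasDerivAt (fun s => w s t) (wx x t) x) ∧
      (∀ x t, HasDerivAt (fun s => w x s) (wt x t) t) ∧
      (∀ x t, deriv (fun s => wx x s) t = deriv (fun s => wt s t) x) := by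
  have hfd : ContDiff ℝ (⊤ : ℕ∞) (fderiv ℝ (Function.uncurry w)) :=
    hw.fderiv_right (by norm_cast)
  have curve1 : ∀ x t : ℝ, HasDerivAt (fun s : ℝ => (s, t)) ((1:ℝ), (0:ℝ)) x := fun x t =>
    (hasDerivAt_id x).prodMk (hasDerivAt_const x t)
  have curve2 : ∀ x t : ℝ, HasDerivAt (fun s : ℝ => (x, s)) ((0:ℝ), (1:ℝ)) t := fun x t =>
    (hasDerivAt_const t x).prodMk (hasDerivAt_id t)
  refine ⟨fun x t => fderiv ℝ (Function.uncurry w) (x, t) (1, 0),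
    fun x t => fderiv ℝ (Function.uncurry w) (x, t) (0, 1), ?_, ?_, ?_, ?_, ?_⟩
  · exact hfd.clm_apply contDiff_const
  · exact hfd.clm_apply contDiff_const
  · intro x t
    have := (hw.differentiable (by simp) (x, t)).hasFDerivAt
    exact this.comp_hasDerivAt x (curve1 x t)
  · intro x t
    have := (hw.differentiable (by simp) (x, t)).hasFDerivAt
    exact this.comp_hasDerivAt t (curve2 x t)
  · intro x t
    have h := (hfd.differentiable (by simp) (x, t)).hasFDerivAt
    have e1 := aux_app h (curve2 x t) rfl (1, 0)
    have e2 := aux_app h (curve1 x t) rfl (0, 1)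
    rw [e1.deriv, e2.deriv]
    exact (hw.contDiffAt.isSymmSndFDerivAt (by
      rw [minSmoothness_of_isRCLikeNormedField]
      exact WithTop.coe_le_coe.2 (le_top (a := (2:ℕ∞))))) _ _

/-- All PDE facts packaged. -/
theorem aux_pde {q : ℝ} {w : ℝ → ℝ → ℝ}
    (hw : ContDiff ℝ (⊤ : ℕ∞) (Function.uncurry w))
    (hpde : ∀ x ∈ Icc (0:ℝ) 1, ∀ t : ℝ, 0 ≤ t →
              deriv (fun s => w x s) t = q * iteratedDeriv 2 (fun s => w s t) x)
    (h0 : ∀ t : ℝ, 0 ≤ t → w 0 t = 0) :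
    ∃ N0' N1' N2 : ℝ → ℝ,
      (∀ t, HasDerivAt (fun t => ∫ x in (0:ℝ)..1, (w x t) ^ 2) (N0' t) t) ∧
      (∀ t, HasDerivAt (fun t => ∫ x in (0:ℝ)..1, (deriv (fun s => w s t) x) ^ 2) (N1' t) t) ∧
      (∀ t, DifferentiableAt ℝ (fun s => w 1 s) t) ∧
      (∀ t, 0 < t →
        N0' t = 2 * q * (w 1 t * deriv (fun s => w s t) 1)
          - 2 * q * (∫ x in (0:ℝ)..1, (deriv (fun s => w s t) x) ^ 2) ∧
        N1' t = 2 * (deriv (fun s => w 1 s) t * deriv (fun s => w s t) 1) - 2 * q * N2 t ∧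
        (deriv (fun s => w s t) 0) ^ 2 ≤
          2 * (∫ x in (0:ℝ)..1, (deriv (fun s => w s t) x) ^ 2) + 2 * N2 t ∧
        (deriv (fun s => w s t) 1) ^ 2 ≤
          2 * (∫ x in (0:ℝ)..1, (deriv (fun s => w s t) x) ^ 2) + 2 * N2 t) ∧
      (∀ t, 0 ≤ t → (∫ x in (0:ℝ)..1, (w x t) ^ 2) ≤
        ∫ x in (0:ℝ)..1, (deriv (fun s => w s t) x) ^ 2) ∧ (∀ t, 0 ≤ N2 t) := by
  obtain ⟨wx, wt, cx, ct, hx, ht, hsymm⟩ := aux_partials hw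
  obtain ⟨wxx, wxt, cxx, cxt, hxx, hxt, -⟩ := aux_partials cx
  obtain ⟨wtx, -, ctx, -, htx, -, -⟩ := aux_partials ct
  have hsym : ∀ x t, wxt x t = wtx x t := fun x t => by
    have := hsymm x t
    rwa [(hxt x t).deriv, (htx x t).deriv] at this
  have dx : ∀ t, deriv (fun s => w s t) = fun x => wx x t := fun t =>
    funext fun x => (hx x t).deriv
  have d1 : ∀ x t, deriv (fun s => w s t) x = wx x t := fun x t => (hx x t).deriv
  have dt : ∀ x t, deriv (fun s => w x s) t = wt x t := fun x t => (ht x t).deriv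
  have dxx : ∀ x t, iteratedDeriv 2 (fun s => w s t) x = wxx x t := fun x t => by
    rw [iteratedDeriv_succ, iteratedDeriv_one, dx, (hxx x t).deriv]
  simp only [dt, dxx] at hpde
  simp only [d1, dt]
  have C : ∀ {f : ℝ → ℝ → ℝ}, ContDiff ℝ (⊤ : ℕ∞) (Function.uncurry f) → ∀ t,
      Continuous fun x => f x t := fun hf t =>
    hf.continuous.comp (by fun_prop : Continuous fun x : ℝ => (x, t))
  have wc := hw.continuous
  have wxc := cx.continuous
  have wtc := ct.continuous
  have wxtc := cxt.continuous
  refine ⟨fun t => ∫ x in (0:ℝ)..1, 2 * (w x t * wt x t),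
    fun t => ∫ x in (0:ℝ)..1, 2 * (wx x t * wxt x t),
    fun t => ∫ x in (0:ℝ)..1, wxx x t ^ 2, ?_, ?_, ?_, ?_, ?_,
    fun t => intervalIntegral.integral_nonneg zero_le_one fun x _ => sq_nonneg _⟩
  · intro t
    refine aux_leibniz (g := fun x t => w x t ^ 2) (g' := fun x t => 2 * (w x t * wt x t))
      (wc.fun_pow 2) (continuous_const.fun_mul (wc.fun_mul wtc)) (fun x t => ?_) t
    refine ((ht x t).fun_pow 2).congr_deriv ?_
    simp; ring
  · intro t
    refine aux_leibniz (g := fun x t => wx x t ^ 2) (g' := fun x t => 2 * (wx x t * wxt x t))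
      (wxc.fun_pow 2) (continuous_const.fun_mul (wxc.fun_mul wxtc)) (fun x t => ?_) t
    refine ((hxt x t).fun_pow 2).congr_deriv ?_
    simp; ring
  · exact fun t => (ht 1 t).differentiableAt
  · intro t tpos
    have w0 : wt 0 t = 0 := by
      have h := ht 0 t
      have e : (fun s => w 0 s) =ᶠ[nhds t] fun _ => 0 := by
        filter_upwards [lt_mem_nhds tpos] with s hs using h0 s hs.le
      exact h.unique ((hasDerivAt_const t (0:ℝ)).congr_of_eventuallyEq e)
    refine ⟨?_, ?_, ?_, ?_⟩
    · have e : ∫ x in (0:ℝ)..1, 2 * (w x t * wt x t)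
          = ∫ x in (0:ℝ)..1, 2 * q * (w x t * wxx x t) := by
        apply intervalIntegral.integral_congr
        intro x hx
        rw [uIcc_of_le zero_le_one] at hx
        simp only [hpde x hx t tpos.le]; ring
      beta_reduce
      rw [e, intervalIntegral.integral_const_mul,
        intervalIntegral.integral_mul_deriv_eq_deriv_mul (fun x _ => hx x t) (fun x _ => hxx x t)
        ((C cx t).intervalIntegrable _ _) ((C cxx t).intervalIntegrable _ _), h0 t tpos.le]
      simp only [← pow_two]; ring
    · have e : ∫ x in (0:ℝ)..1, 2 * (wx x t * wxt x t)
          = 2 * ∫ x in (0:ℝ)..1, (wx x t * wtx x t) := by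
        rw [← intervalIntegral.integral_const_mul]
        simp only [hsym]
      have e2 : ∫ x in (0:ℝ)..1, (wxx x t * wt x t) = q * ∫ x in (0:ℝ)..1, wxx x t ^ 2 := by
        rw [← intervalIntegral.integral_const_mul]
        apply intervalIntegral.integral_congr
        intro x hx
        rw [uIcc_of_le zero_le_one] at hx
        simp only [hpde x hx t tpos.le]; ring
      beta_reduce
      rw [e, intervalIntegral.integral_mul_deriv_eq_deriv_mul (fun x _ => hxx x t)
        (fun x _ => htx x t)
        ((C cxx t).intervalIntegrable _ _) ((C ctx t).intervalIntegrable _ _), e2, w0]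
      ring
    · exact aux_trace (fun x => hxx x t) (C cxx t) (by simp)
    · exact aux_trace (fun x => hxx x t) (C cxx t) (by simp)
  · intro t ht0
    exact aux_poincare (fun x => hx x t) (C cx t) (h0 t ht0)

theorem aux_sphere_compact (n : ℕ) : IsCompact {x : Fin n → ℝ | ∑ i, x i ^ 2 = 1} := by
  have hcl : IsClosed {x : Fin n → ℝ | ∑ i, x i ^ 2 = 1} :=
    isClosed_eq (by fun_prop) continuous_const
  refine IsCompact.of_isClosed_subset
    (isCompact_univ_pi fun _ : Fin n => (isCompact_Icc : IsCompact (Icc (-1:ℝ) 1))) hcl ?_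
  intro x hx i _
  have h1 : x i ^ 2 ≤ 1 := by
    rw [← (show ∑ i, x i ^ 2 = 1 from hx)]
    exact Finset.single_le_sum (f := fun i => x i ^ 2) (fun j _ => sq_nonneg (x j))
      (Finset.mem_univ i)
  exact abs_le.1 ((sq_le_one_iff_abs_le_one _).1 h1)

theorem aux_scale {n : ℕ} (A : Matrix (Fin n) (Fin n) ℝ) (x : Fin n → ℝ) (hx : x ≠ 0) :
    ∃ z : Fin n → ℝ, ∑ i, z i ^ 2 = 1 ∧
      x ⬝ᵥ A *ᵥ x = (z ⬝ᵥ A *ᵥ z) * ∑ i, x i ^ 2 := by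
  have hpos : 0 < ∑ i, x i ^ 2 := by
    obtain ⟨i, hi⟩ := Function.ne_iff.1 hx
    exact Finset.sum_pos' (fun j _ => sq_nonneg _) ⟨i, Finset.mem_univ i, by
      have : x i ≠ 0 := hi
      positivity⟩
  set s := ∑ i, x i ^ 2
  have hs : √s ^ 2 = s := Real.sq_sqrt hpos.le
  have hs0 : √s ≠ 0 := (Real.sqrt_pos.2 hpos).ne'
  refine ⟨(√s)⁻¹ • x, ?_, ?_⟩
  · simp only [Pi.smul_apply, smul_eq_mul, mul_pow]
    rw [← Finset.mul_sum, inv_pow, hs]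
    exact inv_mul_cancel₀ hpos.ne'
  · rw [Matrix.mulVec_smul, dotProduct_smul, smul_dotProduct]
    simp only [smul_eq_mul]
    have : (√s)⁻¹ * (√s)⁻¹ * s = 1 := by
      nth_rewrite 3 [← hs]
      field_simp
    linear_combination (-(x ⬝ᵥ A *ᵥ x)) * this

theorem aux_lower {n : ℕ} {A : Matrix (Fin n) (Fin n) ℝ} (hA : A.PosDef) :
    ∃ k : ℝ, 0 < k ∧ ∀ x : Fin n → ℝ, k * ∑ i, x i ^ 2 ≤ x ⬝ᵥ A *ᵥ x := by
  obtain ⟨k, hk, h⟩ := (aux_sphere_compact n).exists_forall_le' (a := (0:ℝ))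
    (f := fun x : Fin n → ℝ => x ⬝ᵥ A *ᵥ x)
    (Continuous.continuousOn (by fun_prop)) (by
      intro x hx
      have : x ≠ 0 := by
        rintro rfl
        simp at hx
      simpa using hA.dotProduct_mulVec_pos this)
  refine ⟨k, hk, fun x => ?_⟩
  by_cases hx : x = 0
  · subst hx; simp
  · obtain ⟨z, hz, e⟩ := aux_scale A x hx
    rw [e]
    exact mul_le_mul_of_nonneg_right (h z hz) (Finset.sum_nonneg fun i _ => sq_nonneg _)

theorem aux_upper {n : ℕ} (A : Matrix (Fin n) (Fin n) ℝ) :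
    ∃ k : ℝ, 0 < k ∧ ∀ x : Fin n → ℝ, x ⬝ᵥ A *ᵥ x ≤ k * ∑ i, x i ^ 2 := by
  obtain ⟨k, h⟩ := (aux_sphere_compact n).exists_bound_of_continuousOn
    (f := fun x : Fin n → ℝ => x ⬝ᵥ A *ᵥ x)
    (Continuous.continuousOn (by fun_prop))
  refine ⟨max k 1, by positivity, fun x => ?_⟩
  by_cases hx : x = 0
  · subst hx; simp
  · obtain ⟨z, hz, e⟩ := aux_scale A x hx
    rw [e]
    refine mul_le_mul_of_nonneg_right ?_ (Finset.sum_nonneg fun i _ => sq_nonneg _)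
    exact (le_abs_self _).trans ((h z hz).trans (le_max_left _ _))

theorem aux_cs {n : ℕ} (b x : Fin n → ℝ) :
    (b ⬝ᵥ x) ^ 2 ≤ (∑ i, b i ^ 2) * ∑ i, x i ^ 2 :=
  Finset.sum_mul_sq_le_sq_mul_sq _ _ _

theorem aux_tele (a d c : ℕ → ℝ) (k : ℕ) (hk : 1 ≤ k)
    (h1 : d 1 = a 2 - c 1 * a 1)
    (hd : ∀ i, 2 ≤ i → i ≤ k → d i = a (i+1) - a (i-1) - c i * a i) :
    ∑ i ∈ Finset.Icc 1 k, a i * d i = a k * a (k+1) - ∑ i ∈ Finset.Icc 1 k, c i * a i ^ 2 := by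
  induction k, hk using Nat.le_induction with
  | base => simp [h1]; ring
  | succ k hk ih =>
    rw [Finset.sum_Icc_succ_top (by omega), Finset.sum_Icc_succ_top (by omega),
      ih (fun i h2 hi => hd i h2 (by omega)), hd (k+1) (by omega) le_rfl]
    simp only [Nat.add_sub_cancel]
    ring

theorem aux_min (c : ℕ → ℝ) (k : ℕ) (hc : ∀ i, 1 ≤ i → i ≤ k → 0 < c i) :
    ∃ c0 : ℝ, 0 < c0 ∧ ∀ i, 1 ≤ i → i ≤ k → c0 ≤ c i := by
  induction k with
  | zero => exact ⟨1, one_pos, fun i h1 h2 => by omega⟩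
  | succ k ih =>
    obtain ⟨c0, h0, h⟩ := ih fun i h1 h2 => hc i h1 (by omega)
    refine ⟨min c0 (c (k+1)), lt_min h0 (hc _ (by omega) le_rfl), fun i h1 h2 => ?_⟩
    rcases Nat.lt_or_ge k i with hi | hi
    · obtain rfl : i = k + 1 := by omega
      exact min_le_right _ _
    · exact (min_le_left _ _).trans (h i h1 hi)

theorem aux_young {k : ℝ} (hk : 0 < k) (u v : ℝ) : 2 * (u * v) ≤ k * u ^ 2 + v ^ 2 / k := by
  have : k * u ^ 2 + v ^ 2 / k - 2 * (u * v) = (k * u - v) ^ 2 / k := by field_simp; ring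
  have h2 : 0 ≤ (k * u - v) ^ 2 / k := by positivity
  linarith

theorem aux_alg {q q1 a b c0 c1 β ε δ G N1 N2 x2 S T ym y1 y2 g h XQX XPB EX DW : ℝ}
    (hq : 0 < q) (hq1 : 0 < q1) (ha : 0 < a) (hδ : 0 < δ)
    (hXQ : q1 * x2 ≤ XQX) (hXPB : XPB ^ 2 ≤ β * x2) (hEX : EX ^ 2 ≤ ε * x2)
    (hε : 0 < ε) (hβ : 0 < β)
    (hDW : DW ^ 2 ≤ δ * N1) (hh : h ^ 2 ≤ 2 * N1 + 2 * N2) (hg : g ^ 2 ≤ 2 * N1 + 2 * N2)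
    (hy1 : y1 ^ 2 ≤ S) (hy2 : y2 ^ 2 ≤ S)
    (hG : G = 4 * b ^ 2 * ε / q1 + 2 * δ * b ^ 2 / (a * q))
    (hN2 : 0 ≤ N2)
    (hT : 2 * b * c0 * S + G * ym ^ 2 ≤ 2 * b * T)
    (hab : 8 * β / q1 ≤ a * q / 2)
    (hb : 8 * a / q * ((q - c1) ^ 2 + 1) ≤ b * c0) :
    (-XQX + 2 * (h * XPB)) + a * ((2 * q * (y1 * g) - 2 * q * N1)
      + (2 * ((y2 - c1 * y1) * g) - 2 * q * N2)) + b * (2 * (-T + ym * (EX - DW)))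
      ≤ -(q1 / 2 * x2 + a * q / 2 * N1 + b * c0 * S) := by
  have hN : 0 ≤ N1 + N2 := by nlinarith [sq_nonneg h]
  have hS : 0 ≤ S := (sq_nonneg _).trans hy1
  have t1 : 2 * (h * XPB) ≤ 8 * β / q1 * (N1 + N2) + q1 / 4 * x2 := by
    have := aux_young (show 0 < 4 * β / q1 by positivity) h XPB
    have e1 : 4 * β / q1 * h ^ 2 ≤ 4 * β / q1 * (2 * N1 + 2 * N2) :=
      mul_le_mul_of_nonneg_left hh (by positivity)
    have e2 : XPB ^ 2 / (4 * β / q1) ≤ (β * x2) / (4 * β / q1) :=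
      div_le_div_of_nonneg_right hXPB (by positivity)
    have e3 : (β * x2) / (4 * β / q1) = q1 / 4 * x2 := by field_simp
    have e4 : 4 * β / q1 * (2 * N1 + 2 * N2) = 8 * β / q1 * (N1 + N2) := by ring
    linarith
  have t1' : 8 * β / q1 * (N1 + N2) ≤ a * q / 2 * (N1 + N2) :=
    mul_le_mul_of_nonneg_right hab hN
  have t2 : 2 * (g * ((q - c1) * y1 + y2)) ≤ q / 2 * (N1 + N2)
      + 8 / q * ((q - c1) ^ 2 + 1) * S := by
    have := aux_young (show 0 < q / 4 by positivity) g ((q - c1) * y1 + y2)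
    have e1 : q / 4 * g ^ 2 ≤ q / 4 * (2 * N1 + 2 * N2) :=
      mul_le_mul_of_nonneg_left hg (by positivity)
    have e2 : ((q - c1) * y1 + y2) ^ 2 ≤ 2 * ((q - c1) ^ 2 + 1) * S := by
      have r1 : (q - c1) ^ 2 * y1 ^ 2 ≤ (q - c1) ^ 2 * S :=
        mul_le_mul_of_nonneg_left hy1 (sq_nonneg _)
      nlinarith [sq_nonneg ((q - c1) * y1 - y2)]
    have e3 : ((q - c1) * y1 + y2) ^ 2 / (q / 4) ≤ (2 * ((q - c1) ^ 2 + 1) * S) / (q / 4) :=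
      div_le_div_of_nonneg_right e2 (by positivity)
    have e4 : (2 * ((q - c1) ^ 2 + 1) * S) / (q / 4) = 8 / q * ((q - c1) ^ 2 + 1) * S := by
      field_simp; ring
    have e5 : q / 4 * (2 * N1 + 2 * N2) = q / 2 * (N1 + N2) := by ring
    linarith
  have t2' := mul_le_mul_of_nonneg_left t2 ha.le
  have t2c := mul_le_mul_of_nonneg_right hb hS
  have t2e : a * (8 / q * ((q - c1) ^ 2 + 1) * S) = 8 * a / q * ((q - c1) ^ 2 + 1) * S := by ring
  have t3 : 2 * (EX * (b * ym)) ≤ q1 / 4 * x2 + 4 * b ^ 2 * ε / q1 * ym ^ 2 := by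
    have := aux_young (show 0 < q1 / (4 * ε) by positivity) EX (b * ym)
    have e1 := mul_le_mul_of_nonneg_left hEX (show 0 ≤ q1 / (4 * ε) by positivity)
    have e2 : q1 / (4 * ε) * (ε * x2) = q1 / 4 * x2 := by field_simp
    have e3 : (b * ym) ^ 2 / (q1 / (4 * ε)) = 4 * b ^ 2 * ε / q1 * ym ^ 2 := by field_simp
    linarith
  have t4 : 2 * (DW * (-(b * ym))) ≤ a * q / 2 * N1 + 2 * δ * b ^ 2 / (a * q) * ym ^ 2 := by
    have := aux_young (show 0 < a * q / (2 * δ) by positivity) DW (-(b * ym))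
    have e1 := mul_le_mul_of_nonneg_left hDW (show 0 ≤ a * q / (2 * δ) by positivity)
    have e2 : a * q / (2 * δ) * (δ * N1) = a * q / 2 * N1 := by field_simp
    have e3 : (-(b * ym)) ^ 2 / (a * q / (2 * δ)) = 2 * δ * b ^ 2 / (a * q) * ym ^ 2 := by
      field_simp
    linarith
  have hG' : G * ym ^ 2 = 4 * b ^ 2 * ε / q1 * ym ^ 2 + 2 * δ * b ^ 2 / (a * q) * ym ^ 2 := by
    rw [hG]; ring
  have hN2' : 0 ≤ a * q * N2 := by positivity
  linarith [mul_add a (q / 2 * (N1 + N2)) (8 / q * ((q - c1) ^ 2 + 1) * S)]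

theorem aux_decay {V V' : ℝ → ℝ} {lam : ℝ} (hV : ∀ t, 0 < t → HasDerivAt V (V' t) t)
    (hc : ContinuousOn V (Ici 0)) (h : ∀ t, 0 < t → V' t ≤ -lam * V t) {t : ℝ} (ht : 0 ≤ t) :
    V t ≤ V 0 * Real.exp (-lam * t) := by
  have hd : ∀ t, 0 < t → HasDerivAt (fun t => V t * Real.exp (lam * t))
      (V' t * Real.exp (lam * t) + V t * (Real.exp (lam * t) * lam)) t := fun t ht => by
    refine (hV t ht).fun_mul ?_
    have := ((hasDerivAt_id t).const_mul lam).exp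
    simpa using this
  have anti : AntitoneOn (fun t => V t * Real.exp (lam * t)) (Ici 0) := by
    apply antitoneOn_of_deriv_nonpos (convex_Ici 0)
    · exact hc.mul (Continuous.continuousOn (by fun_prop))
    · intro x hx
      rw [interior_Ici] at hx
      exact (hd x hx).differentiableAt.differentiableWithinAt
    · intro x hx
      rw [interior_Ici] at hx
      rw [(hd x hx).deriv]
      have := mul_le_mul_of_nonneg_right (h x hx) (Real.exp_pos (lam * x)).le
      linarith
  have h1 := anti (mem_Ici.2 le_rfl) (mem_Ici.2 ht) ht
  simp only [mul_zero, Real.exp_zero, mul_one] at h1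
  have h2 := mul_le_mul_of_nonneg_right h1 (Real.exp_pos (-lam * t)).le
  rw [mul_assoc, ← Real.exp_add] at h2
  simpa using h2

theorem aux_quad {n : ℕ} {M P Q : Matrix (Fin n) (Fin n) ℝ} {B : Fin n → ℝ} (hP : P.PosDef)
    (hLyap : P * M + Mᵀ * P = -Q) {X : ℝ → Fin n → ℝ} {X' : Fin n → ℝ} {t h : ℝ}
    (hX : HasDerivAt X X' t) (e : X' = M *ᵥ X t + h • B) :
    HasDerivAt (fun t => X t ⬝ᵥ P *ᵥ X t)
      (-(X t ⬝ᵥ Q *ᵥ X t) + 2 * (h * ((P *ᵥ B) ⬝ᵥ X t))) t := by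
  have hPT : Pᵀ = P := by simpa [Matrix.IsHermitian] using hP.isHermitian
  have hsym : ∀ u v : Fin n → ℝ, u ⬝ᵥ P *ᵥ v = v ⬝ᵥ P *ᵥ u := by
    intro u v
    rw [Matrix.dotProduct_mulVec, ← Matrix.mulVec_transpose, hPT, dotProduct_comm]
  have hXi := hasDerivAt_pi.1 hX
  have h1 : HasDerivAt (fun t => X t ⬝ᵥ P *ᵥ X t) (X' ⬝ᵥ P *ᵥ X t + X t ⬝ᵥ P *ᵥ X') t := by
    simp only [dotProduct, Matrix.mulVec]
    rw [← Finset.sum_add_distrib]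
    refine HasDerivAt.fun_sum fun i _ => ?_
    refine (hXi i).fun_mul ?_
    exact HasDerivAt.fun_sum fun j _ => (hXi j).const_mul _
  refine h1.congr_deriv ?_
  have hQ : X t ⬝ᵥ Q *ᵥ X t = -(2 * (X t ⬝ᵥ P *ᵥ (M *ᵥ X t))) := by
    have : Q = -(P * M + Mᵀ * P) := by rw [hLyap, neg_neg]
    rw [this, Matrix.neg_mulVec, dotProduct_neg, Matrix.add_mulVec, dotProduct_add,
      ← Matrix.mulVec_mulVec, ← Matrix.mulVec_mulVec, Matrix.dotProduct_mulVec _ Mᵀ,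
      Matrix.vecMul_transpose, hsym (M *ᵥ X t)]
    ring
  rw [hsym X' (X t), hQ, e, Matrix.mulVec_add, dotProduct_add, Matrix.mulVec_smul,
    dotProduct_smul, smul_eq_mul, dotProduct_comm (P *ᵥ B)]
  ring

/-- exponential stability of the full target system consisting of the
PDE–ODE subsystem together with the chain of ODE-backstepping variables `y₁,…,y_m`. -/
theorem stmt10
    (q : ℝ) (hq : 0 < q) (n : ℕ) (hn : 1 ≤ n)
    (M : Matrix (Fin n) (Fin n) ℝ) (B : Fin n → ℝ)
    (P Q : Matrix (Fin n) (Fin n) ℝ) (hP : P.PosDef) (hQ : Q.PosDef)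
    (hLyap : P * M + Mᵀ * P = -Q)
    (m : ℕ) (hm : 2 ≤ m)
    (D : ℝ → ℝ) (hD : ContinuousOn D (Icc (0:ℝ) 1))
    (E : Fin n → ℝ)
    (c : ℕ → ℝ) (hc : ∀ i, 1 ≤ i → i ≤ m - 1 → 0 < c i) :
    ∃ cmstar : ℝ, 0 < cmstar ∧
      ∀ cm : ℝ, cmstar ≤ cm →
        ∃ Υ lam : ℝ, 0 < Υ ∧ 0 < lam ∧
          ∀ (w : ℝ → ℝ → ℝ) (X : ℝ → Fin n → ℝ) (y : ℕ → ℝ → ℝ),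
            ContDiff ℝ (⊤ : ℕ∞) (Function.uncurry w) →
            (∀ x ∈ Icc (0:ℝ) 1, ∀ t : ℝ, 0 ≤ t →
              deriv (fun s => w x s) t = q * iteratedDeriv 2 (fun s => w s t) x) →
            (∀ t : ℝ, 0 ≤ t → w 0 t = 0) →
            ContDiff ℝ (⊤ : ℕ∞) X →
            (∀ t : ℝ, 0 ≤ t →
              deriv X t = M.mulVec (X t) + (deriv (fun s => w s t) 0) • B) →
            (∀ i, 1 ≤ i → i ≤ m → Differentiable ℝ (y i)) →
            (∀ t : ℝ, 0 ≤ t → y 1 t = w 1 t) →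
            (∀ t : ℝ, 0 ≤ t → y 2 t = deriv (fun s => w 1 s) t + c 1 * y 1 t) →
            (∀ i, 2 ≤ i → i ≤ m - 1 → ∀ t : ℝ, 0 ≤ t →
              deriv (y i) t = y (i+1) t - y (i-1) t - c i * y i t) →
            (∀ t : ℝ, 0 ≤ t →
              deriv (y m) t = -(y (m-1) t) - cm * y m t + E ⬝ᵥ X t
                - ∫ σ in (0:ℝ)..1, D σ * w σ t) →
            ∀ t : ℝ, 0 ≤ t →
              Omega10 n m w X y t ≤ Υ * Omega10 n m w X y 0 * Real.exp (-lam * t) := by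
  obtain ⟨q1, hq1, hQl⟩ := aux_lower hQ
  obtain ⟨p1, hp1, hPl⟩ := aux_lower hP
  obtain ⟨p2, hp2, hPu⟩ := aux_upper P
  obtain ⟨c0, hc0, hcl⟩ := aux_min c (m - 1) hc
  obtain ⟨d, hd⟩ := isCompact_Icc.exists_bound_of_continuousOn hD
  obtain ⟨δ, hδdef⟩ : ∃ δ, δ = d ^ 2 + 1 := ⟨_, rfl⟩
  obtain ⟨β, hβdef⟩ : ∃ β, β = (∑ i, (P *ᵥ B) i ^ 2) + 1 := ⟨_, rfl⟩
  obtain ⟨ε, hεdef⟩ : ∃ ε, ε = (∑ i, E i ^ 2) + 1 := ⟨_, rfl⟩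
  have hδ : 0 < δ := by rw [hδdef]; positivity
  have hβ : 0 < β := by rw [hβdef]; positivity
  have hε : 0 < ε := by rw [hεdef]; positivity
  obtain ⟨a, hadef⟩ : ∃ a, a = 16 * β / (q1 * q) := ⟨_, rfl⟩
  have ha : 0 < a := by rw [hadef]; positivity
  have hab : 8 * β / q1 ≤ a * q / 2 := by
    rw [hadef]; apply le_of_eq; field_simp; norm_num
  obtain ⟨b, hbdef⟩ : ∃ b, b = 8 * a / q * ((q - c 1) ^ 2 + 1) / c0 := ⟨_, rfl⟩
  have hb : 0 < b := by rw [hbdef]; positivity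
  have hbc : 8 * a / q * ((q - c 1) ^ 2 + 1) ≤ b * c0 := by
    rw [hbdef]; apply le_of_eq; field_simp
  obtain ⟨G, hG⟩ : ∃ G, G = 4 * b ^ 2 * ε / q1 + 2 * δ * b ^ 2 / (a * q) := ⟨_, rfl⟩
  have hGpos : 0 < G := by rw [hG]; positivity
  obtain ⟨lam, hlamdef⟩ : ∃ lam, lam = min (q1 / (2 * p2)) (min (q / 4) c0) := ⟨_, rfl⟩
  have hlam : 0 < lam := by rw [hlamdef]; positivity
  have hl1 : lam * p2 ≤ q1 / 2 := by
    have : lam ≤ q1 / (2 * p2) := hlamdef ▸ min_le_left _ _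
    calc lam * p2 ≤ q1 / (2 * p2) * p2 := mul_le_mul_of_nonneg_right this hp2.le
      _ = q1 / 2 := by field_simp
  have hl2 : lam ≤ q / 4 := hlamdef ▸ (min_le_right _ _).trans (min_le_left _ _)
  have hl3 : lam ≤ c0 := hlamdef ▸ (min_le_right _ _).trans (min_le_right _ _)
  obtain ⟨k, hkdef⟩ : ∃ k, k = min p1 (min a b) := ⟨_, rfl⟩
  have hk : 0 < k := by rw [hkdef]; positivity
  have hk1 : k ≤ p1 := hkdef ▸ min_le_left _ _
  have hk2 : k ≤ a := hkdef ▸ (min_le_right _ _).trans (min_le_left _ _)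
  have hk3 : k ≤ b := hkdef ▸ (min_le_right _ _).trans (min_le_right _ _)
  obtain ⟨K, hKdef⟩ : ∃ K, K = p2 + a + b := ⟨_, rfl⟩
  have hK : 0 < K := by rw [hKdef]; positivity
  refine ⟨c0 + G / (2 * b), by positivity, fun cm hcm => ⟨K / k, lam, by positivity, hlam, ?_⟩⟩
  intro w X y hw hpde hw0 hX hXode hydiff hy1 hy2 hyi hym t ht
  obtain ⟨N0', N1', N2, hN0, hN1, hw1, hN, hpoin, hN2⟩ := aux_pde hw hpde hw0
  have hXd : ∀ t, HasDerivAt X (deriv X t) t := fun t =>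
    (hX.differentiable (by simp) t).hasDerivAt
  have hyd : ∀ i ∈ Finset.Icc 1 m, ∀ t, HasDerivAt (y i) (deriv (y i) t) t := fun i hi t =>
    (hydiff i (Finset.mem_Icc.1 hi).1 (Finset.mem_Icc.1 hi).2 t).hasDerivAt
  have hSd : ∀ t, HasDerivAt (fun t => ∑ i ∈ Finset.Icc 1 m, (y i t) ^ 2)
      (2 * ∑ i ∈ Finset.Icc 1 m, y i t * deriv (y i) t) t := fun t => by
    rw [Finset.mul_sum]
    refine HasDerivAt.fun_sum fun i hi => ?_
    refine ((hyd i hi t).fun_pow 2).congr_deriv ?_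
    simp; ring
  -- value of the derivative of the y-part
  have hSval : ∀ t, 0 < t → ∑ i ∈ Finset.Icc 1 m, y i t * deriv (y i) t
      = -((∑ i ∈ Finset.Icc 1 (m - 1), c i * y i t ^ 2) + cm * y m t ^ 2)
        + y m t * (E ⬝ᵥ X t - ∫ σ in (0:ℝ)..1, D σ * w σ t) := by
    intro t tpos
    have hd1 : deriv (y 1) t = y 2 t - c 1 * y 1 t := by
      have e : (y 1) =ᶠ[nhds t] fun s => w 1 s := by
        filter_upwards [lt_mem_nhds tpos] with s hs using hy1 s hs.le
      rw [e.deriv_eq, hy2 t tpos.le]; ring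
    have := aux_tele (fun i => y i t) (fun i => deriv (y i) t) c (m - 1) (by omega) hd1
      (fun i h2 hi => hyi i h2 hi t tpos.le)
    obtain ⟨j, rfl⟩ : ∃ j, m = j + 1 := ⟨m - 1, by omega⟩
    simp only [Nat.add_sub_cancel] at this ⊢
    rw [Finset.sum_Icc_succ_top (by omega), this, hym t tpos.le]
    simp only [Nat.add_sub_cancel]
    ring
  have hTbound : ∀ t, 2 * b * c0 * (∑ i ∈ Finset.Icc 1 m, y i t ^ 2) + G * y m t ^ 2 ≤
      2 * b * ((∑ i ∈ Finset.Icc 1 (m - 1), c i * y i t ^ 2) + cm * y m t ^ 2) := by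
    intro t
    have e1 : c0 * (∑ i ∈ Finset.Icc 1 (m - 1), y i t ^ 2) ≤
        ∑ i ∈ Finset.Icc 1 (m - 1), c i * y i t ^ 2 := by
      rw [Finset.mul_sum]
      refine Finset.sum_le_sum fun i hi => ?_
      exact mul_le_mul_of_nonneg_right
        (hcl i (Finset.mem_Icc.1 hi).1 (Finset.mem_Icc.1 hi).2) (sq_nonneg _)
    have e2 : (∑ i ∈ Finset.Icc 1 m, y i t ^ 2)
        = (∑ i ∈ Finset.Icc 1 (m - 1), y i t ^ 2) + y m t ^ 2 := by
      obtain ⟨j, rfl⟩ : ∃ j, m = j + 1 := ⟨m - 1, by omega⟩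
      rw [Finset.sum_Icc_succ_top (by omega)]
      simp
    have e3 : (c0 + G / (2 * b)) * y m t ^ 2 ≤ cm * y m t ^ 2 :=
      mul_le_mul_of_nonneg_right hcm (sq_nonneg _)
    have e4 : 2 * b * ((c0 + G / (2 * b)) * y m t ^ 2)
        = 2 * b * c0 * y m t ^ 2 + G * y m t ^ 2 := by field_simp
    have e5 := mul_le_mul_of_nonneg_left (add_le_add e1 e3) (show 0 ≤ 2 * b by positivity)
    rw [mul_add, e4] at e5
    rw [e2]
    linarith
  -- the Lyapunov function
  have hVd : ∀ t, HasDerivAt (fun t => X t ⬝ᵥ P *ᵥ X t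
      + a * ((∫ x in (0:ℝ)..1, (w x t) ^ 2)
        + ∫ x in (0:ℝ)..1, (deriv (fun s => w s t) x) ^ 2)
      + b * ∑ i ∈ Finset.Icc 1 m, (y i t) ^ 2)
      (deriv (fun t => X t ⬝ᵥ P *ᵥ X t) t + a * (N0' t + N1' t)
        + b * (2 * ∑ i ∈ Finset.Icc 1 m, y i t * deriv (y i) t)) t := by
    intro t
    refine HasDerivAt.fun_add (HasDerivAt.fun_add ?_ (((hN0 t).fun_add (hN1 t)).const_mul a))
      ((hSd t).const_mul b)
    apply DifferentiableAt.hasDerivAt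
    have hXi : ∀ i, DifferentiableAt ℝ (fun t => X t i) t := fun i =>
      (hasDerivAt_pi.1 (hXd t) i).differentiableAt
    simp only [dotProduct, Matrix.mulVec]
    fun_prop
  have hS1 : ∀ t i, 1 ≤ i → i ≤ m → y i t ^ 2 ≤ ∑ i ∈ Finset.Icc 1 m, (y i t) ^ 2 :=
    fun t i h1 h2 => Finset.single_le_sum (f := fun i => y i t ^ 2)
      (fun j _ => sq_nonneg _) (Finset.mem_Icc.2 ⟨h1, h2⟩)
  have hx2 : ∀ t, 0 ≤ ∑ i, X t i ^ 2 := fun t => Finset.sum_nonneg fun i _ => sq_nonneg _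
  have hS0 : ∀ t, 0 ≤ ∑ i ∈ Finset.Icc 1 m, (y i t) ^ 2 := fun t =>
    Finset.sum_nonneg fun i _ => sq_nonneg _
  have hN0n : ∀ t, 0 ≤ ∫ x in (0:ℝ)..1, (w x t) ^ 2 := fun t =>
    intervalIntegral.integral_nonneg zero_le_one fun x _ => sq_nonneg _
  have hN1n : ∀ t, 0 ≤ ∫ x in (0:ℝ)..1, (deriv (fun s => w s t) x) ^ 2 := fun t =>
    intervalIntegral.integral_nonneg zero_le_one fun x _ => sq_nonneg _
  have hdecay := aux_decay (lam := lam) (fun t _ => hVd t)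
    (fun t _ => (hVd t).continuousAt.continuousWithinAt) ?_ ht
  · have low := fun t => hPl (X t)
    have up := fun t => hPu (X t)
    have m1 := mul_le_mul_of_nonneg_right hk1 (hx2 t)
    have m2 := mul_le_mul_of_nonneg_right hk2 (add_nonneg (hN0n t) (hN1n t))
    have m3 := mul_le_mul_of_nonneg_right hk3 (hS0 t)
    have m4 : p2 * ∑ i, X 0 i ^ 2 ≤ K * ∑ i, X 0 i ^ 2 :=
      mul_le_mul_of_nonneg_right (by rw [hKdef]; linarith) (hx2 0)
    have m5 := mul_le_mul_of_nonneg_right (show a ≤ K by rw [hKdef]; linarith)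
      (add_nonneg (hN0n 0) (hN1n 0))
    have m6 := mul_le_mul_of_nonneg_right (show b ≤ K by rw [hKdef]; linarith) (hS0 0)
    have hlow : k * Omega10 n m w X y t ≤ X t ⬝ᵥ P *ᵥ X t
      + a * ((∫ x in (0:ℝ)..1, (w x t) ^ 2)
        + ∫ x in (0:ℝ)..1, (deriv (fun s => w s t) x) ^ 2)
      + b * ∑ i ∈ Finset.Icc 1 m, (y i t) ^ 2 := by
      unfold Omega10
      linarith [low t]
    have hup : X 0 ⬝ᵥ P *ᵥ X 0
      + a * ((∫ x in (0:ℝ)..1, (w x 0) ^ 2)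
        + ∫ x in (0:ℝ)..1, (deriv (fun s => w s 0) x) ^ 2)
      + b * ∑ i ∈ Finset.Icc 1 m, (y i 0) ^ 2 ≤ K * Omega10 n m w X y 0 := by
      unfold Omega10
      linarith [up 0]
    have hfin := hlow.trans (hdecay.trans
      (mul_le_mul_of_nonneg_right hup (Real.exp_pos (-lam * t)).le))
    have e : K / k * Omega10 n m w X y 0 * Real.exp (-lam * t)
        = (K * Omega10 n m w X y 0 * Real.exp (-lam * t)) / k := by ring
    rw [e, le_div_iff₀ hk]
    linarith
  · intro t tpos
    obtain ⟨n0, n1, g0, g1⟩ := hN t tpos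
    have hquad := (aux_quad hP hLyap (hXd t) (hXode t tpos.le)).deriv
    have hwt : deriv (fun s => w 1 s) t = y 2 t - c 1 * y 1 t := by
      rw [hy2 t tpos.le]; ring
    have hDw : (∫ σ in (0:ℝ)..1, D σ * w σ t) ^ 2 ≤
        δ * ∫ x in (0:ℝ)..1, (deriv (fun s => w s t) x) ^ 2 := by
      have wc : Continuous fun x => w x t :=
        hw.continuous.comp (by fun_prop : Continuous fun x : ℝ => (x, t))
      have cDw : ContinuousOn (fun σ => D σ * w σ t) (Icc 0 1) := hD.mul wc.continuousOn
      have h1 := aux_sqint cDw le_rfl zero_le_one le_rfl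
      have h2 : ∫ x in (0:ℝ)..1, (D x * w x t) ^ 2 ≤ ∫ x in (0:ℝ)..1, δ * (w x t) ^ 2 := by
        apply intervalIntegral.integral_mono_on zero_le_one
          (ContinuousOn.intervalIntegrable_of_Icc zero_le_one (cDw.pow 2))
          (Continuous.intervalIntegrable (by fun_prop) _ _)
        intro x hx
        simp only [Pi.pow_apply, mul_pow]
        refine mul_le_mul_of_nonneg_right ?_ (sq_nonneg _)
        have h3 := hd x hx
        rw [Real.norm_eq_abs] at h3
        have h4 := sq_le_sq' (by linarith [abs_nonneg (D x)]) h3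
        rw [sq_abs] at h4
        linarith
      rw [intervalIntegral.integral_const_mul] at h2
      exact h1.trans (h2.trans (mul_le_mul_of_nonneg_left (hpoin t tpos.le) hδ.le))
    have hPB : ((P *ᵥ B) ⬝ᵥ X t) ^ 2 ≤ β * ∑ i, X t i ^ 2 :=
      (aux_cs _ _).trans (mul_le_mul_of_nonneg_right (by linarith) (hx2 t))
    have hEX : (E ⬝ᵥ X t) ^ 2 ≤ ε * ∑ i, X t i ^ 2 :=
      (aux_cs _ _).trans (mul_le_mul_of_nonneg_right (by linarith) (hx2 t))
    have key := aux_alg hq hq1 ha hδ (hQl (X t)) hPB hEX hε hβ hDw g0 g1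
      (hS1 t 1 le_rfl (by omega)) (hS1 t 2 (by omega) hm) hG (hN2 t) (hTbound t) hab hbc
    rw [hquad, n0, n1, hSval t tpos, hwt, hy1 t tpos.le]
    rw [hy1 t tpos.le] at key
    refine key.trans ?_
    have r1 := mul_le_mul_of_nonneg_left (hPu (X t)) hlam.le
    have r2 := mul_le_mul_of_nonneg_right hl1 (hx2 t)
    have r3 := mul_le_mul_of_nonneg_left (hpoin t tpos.le) (mul_pos hlam ha).le
    have r4 := mul_le_mul_of_nonneg_right hl2 (mul_nonneg ha.le (hN1n t))
    have r5 := mul_le_mul_of_nonneg_right hl3 (mul_nonneg hb.le (hS0 t))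
    linarith
end

section
/- There exist constants Υ_e > 0 and λ_e > 0, depending only on q, A, A_z, C_X, C_z, P₀, P₂, ϑ, θ, P̄, Q̄ (and not on the particular solution), such that every smooth solution (ũ, X̃, Z̃) of the observer error system satisfies Θ_e(t) ≤ Υ_e · (Θ_e(0)² + ũ_x(0,0)²)^{1/2} · e^{−λ_e t} for all t ≥ 0, where Θ_e(t) = (Σ_{i=0}^{2m} ‖∂_x^i ũ(·,t)‖² + |Z̃(t)|² + |X̃(t)|²)^{1/2}. -/
open scoped Matrix
open Set

/-- `Θ_e(t)² = Σ_{i=0}^{2m} ‖∂_x^i ũ(·,t)‖² + |Z̃(t)|² + |X̃(t)|²`. -/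
noncomputable def ThetaESq (n m : ℕ) (tu : ℝ → ℝ → ℝ)
    (tX : ℝ → Fin n → ℝ) (tZ : ℝ → Fin m → ℝ) (t : ℝ) : ℝ :=
  (∑ i ∈ Finset.range (2*m + 1),
    ∫ x in (0:ℝ)..1, (iteratedDeriv i (fun s => tu s t) x) ^ 2)
  + (∑ i, (tZ t i) ^ 2) + ∑ i, (tX t i) ^ 2


namespace Obs

open MeasureTheory intervalIntegral Filter Topology

/-- spatial derivatives of a function of two variables -/
noncomputable def DD (F : ℝ → ℝ → ℝ) (i : ℕ) : ℝ → ℝ → ℝ :=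
  fun x t => iteratedDeriv i (fun s => F s t) x

/-- time derivative -/
noncomputable def Dt (F : ℝ → ℝ → ℝ) : ℝ → ℝ → ℝ := fun x t => deriv (fun s => F x s) t

/-- space derivative -/
noncomputable def Dx (F : ℝ → ℝ → ℝ) : ℝ → ℝ → ℝ := fun x t => deriv (fun s => F s t) x

/-- smoothness of a function of two variables -/
def Sm (F : ℝ → ℝ → ℝ) : Prop := ContDiff ℝ (⊤ : ℕ∞) (Function.uncurry F)

lemma DD_succ (F : ℝ → ℝ → ℝ) (i : ℕ) : DD F (i+1) = Dx (DD F i) := by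
  funext x t
  simp only [DD, Dx, iteratedDeriv_succ]

lemma DD_zero (F : ℝ → ℝ → ℝ) : DD F 0 = F := by
  funext x t
  simp [DD]

lemma Sm.hasDerivAt_x {F : ℝ → ℝ → ℝ} (h : Sm F) (x t : ℝ) :
    HasDerivAt (fun s => F s t) (fderiv ℝ (Function.uncurry F) (x, t) (1, 0)) x := by
  have h1 : HasFDerivAt (Function.uncurry F) (fderiv ℝ (Function.uncurry F) (x, t)) (x, t) :=
    (ContDiff.differentiable h (by simp)).differentiableAt.hasFDerivAt
  have h2 : HasDerivAt (fun s : ℝ => (s, t)) ((1 : ℝ), (0 : ℝ)) x :=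
    (hasDerivAt_id x).prodMk (hasDerivAt_const x t)
  exact h1.comp_hasDerivAt x h2

lemma Sm.hasDerivAt_t {F : ℝ → ℝ → ℝ} (h : Sm F) (x t : ℝ) :
    HasDerivAt (fun s => F x s) (fderiv ℝ (Function.uncurry F) (x, t) (0, 1)) t := by
  have h1 : HasFDerivAt (Function.uncurry F) (fderiv ℝ (Function.uncurry F) (x, t)) (x, t) :=
    (ContDiff.differentiable h (by simp)).differentiableAt.hasFDerivAt
  have h2 : HasDerivAt (fun s : ℝ => (x, s)) ((0 : ℝ), (1 : ℝ)) t :=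
    (hasDerivAt_const t x).prodMk (hasDerivAt_id t)
  exact h1.comp_hasDerivAt t h2

lemma Sm.uncurry_Dx {F : ℝ → ℝ → ℝ} (h : Sm F) :
    Function.uncurry (Dx F) = fun p => fderiv ℝ (Function.uncurry F) p (1, 0) := by
  funext p
  exact (h.hasDerivAt_x p.1 p.2).deriv

lemma Sm.uncurry_Dt {F : ℝ → ℝ → ℝ} (h : Sm F) :
    Function.uncurry (Dt F) = fun p => fderiv ℝ (Function.uncurry F) p (0, 1) := by
  funext p
  exact (h.hasDerivAt_t p.1 p.2).deriv

lemma Sm.fd {F : ℝ → ℝ → ℝ} (h : Sm F) :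
    ContDiff ℝ (⊤ : ℕ∞) (fderiv ℝ (Function.uncurry F)) :=
  ContDiff.fderiv_right h (by simp)

lemma Sm.dx {F : ℝ → ℝ → ℝ} (h : Sm F) : Sm (Dx F) := by
  unfold Sm
  rw [h.uncurry_Dx]
  exact h.fd.clm_apply contDiff_const

lemma Sm.dt {F : ℝ → ℝ → ℝ} (h : Sm F) : Sm (Dt F) := by
  unfold Sm
  rw [h.uncurry_Dt]
  exact h.fd.clm_apply contDiff_const

lemma Sm.comm {F : ℝ → ℝ → ℝ} (h : Sm F) : Dt (Dx F) = Dx (Dt F) := by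
  funext x t
  have h1 := (h.dx.hasDerivAt_t x t).deriv
  have h2 := (h.dt.hasDerivAt_x x t).deriv
  have hd : DifferentiableAt ℝ (fderiv ℝ (Function.uncurry F)) (x, t) :=
    (h.fd.differentiable (by simp)).differentiableAt
  have hs : IsSymmSndFDerivAt ℝ (Function.uncurry F) (x, t) :=
    (ContDiff.contDiffAt h).isSymmSndFDerivAt (by simp; exact WithTop.coe_le_coe.2 (le_top : (2:ℕ∞) ≤ ⊤))
  change deriv _ _ = deriv _ _
  rw [h1, h2, h.uncurry_Dx, h.uncurry_Dt]
  rw [fderiv_clm_apply hd (by fun_prop), fderiv_clm_apply hd (by fun_prop)]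
  simp
  exact hs.eq _ _

lemma Sm.DD {F : ℝ → ℝ → ℝ} (h : Sm F) (i : ℕ) : Sm (DD F i) := by
  induction i with
  | zero => rwa [DD_zero]
  | succ k ih => rw [DD_succ]; exact ih.dx

lemma Sm.hx {F : ℝ → ℝ → ℝ} (h : Sm F) (x t : ℝ) :
    HasDerivAt (fun s => F s t) (Dx F x t) x :=
  (h.hasDerivAt_x x t).differentiableAt.hasDerivAt

lemma Sm.ht {F : ℝ → ℝ → ℝ} (h : Sm F) (x t : ℝ) :
    HasDerivAt (fun s => F x s) (Dt F x t) t :=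
  (h.hasDerivAt_t x t).differentiableAt.hasDerivAt

lemma Sm.cont {F : ℝ → ℝ → ℝ} (h : Sm F) : Continuous (Function.uncurry F) :=
  ContDiff.continuous h

lemma Sm.contx {F : ℝ → ℝ → ℝ} (h : Sm F) (t : ℝ) : Continuous (fun x => F x t) :=
  h.cont.comp (by fun_prop : Continuous fun x : ℝ => (x, t))

lemma Sm.contt {F : ℝ → ℝ → ℝ} (h : Sm F) (x : ℝ) : Continuous (fun t => F x t) :=
  h.cont.comp (by fun_prop : Continuous fun t : ℝ => (x, t))

/-- differentiation under the integral -/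
lemma Sm.hasDerivAt_integral {F : ℝ → ℝ → ℝ} (h : Sm F) (t : ℝ) :
    HasDerivAt (fun s => ∫ x in (0:ℝ)..1, F x s) (∫ x in (0:ℝ)..1, Dt F x t) t := by
  have hK : IsCompact (Icc (0:ℝ) 1 ×ˢ Icc (t-1) (t+1)) := isCompact_Icc.prod isCompact_Icc
  obtain ⟨C, hC⟩ := hK.exists_bound_of_continuousOn h.dt.cont.continuousOn
  have := intervalIntegral.hasDerivAt_integral_of_dominated_loc_of_deriv_le
    (μ := volume) (a := (0:ℝ)) (b := 1) (F := fun s x => F x s) (F' := fun s x => Dt F x s)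
    (x₀ := t) (s := Icc (t-1) (t+1)) (bound := fun _ => C)
    (Icc_mem_nhds (by linarith) (by linarith))
    (Eventually.of_forall fun s => (h.contx s).aestronglyMeasurable)
    ((h.contx t).intervalIntegrable _ _)
    ((h.dt.contx t).aestronglyMeasurable)
    (Eventually.of_forall fun x hx s hs => by
      rw [uIoc_of_le zero_le_one] at hx
      exact hC (x, s) ⟨⟨hx.1.le, hx.2⟩, hs⟩)
    (by simp)
    (Eventually.of_forall fun x hx s hs => h.ht x s)
  exact this.2

/-- Poincare with Dirichlet conditions -/
lemma poincare {f f' : ℝ → ℝ} (hf : ∀ x, HasDerivAt f (f' x) x) (hc : Continuous f')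
    (h0 : f 0 = 0) (h1 : f 1 = 0) :
    ∫ x in (0:ℝ)..1, f x ^ 2 ≤ ∫ x in (0:ℝ)..1, f' x ^ 2 := by
  have hfc : Continuous f := continuous_iff_continuousAt.2 fun x => (hf x).continuousAt
  have key : ∫ x in (0:ℝ)..1, (-2 * f x ^ 2 + (1 - 2 * x) * (2 * f x * f' x)) = 0 := by
    rw [integral_eq_sub_of_hasDerivAt (f := fun x => (1 - 2 * x) * f x ^ 2)]
    · simp [h0, h1]
    · intro x _
      have := (((hasDerivAt_id x).const_mul 2).const_sub 1).mul ((hf x).pow 2)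
      refine this.congr_deriv ?_
      simp
    · exact Continuous.intervalIntegrable (by fun_prop) _ _
  have : ∫ x in (0:ℝ)..1, (f x ^ 2 + (-2 * f x ^ 2 + (1 - 2 * x) * (2 * f x * f' x)))
      ≤ ∫ x in (0:ℝ)..1, f' x ^ 2 := by
    apply integral_mono_on zero_le_one
    · exact Continuous.intervalIntegrable (by fun_prop) _ _
    · exact Continuous.intervalIntegrable (by fun_prop) _ _
    · intro x hx
      nlinarith [sq_nonneg (f' x - (1 - 2*x) * f x), mul_nonneg (mul_nonneg hx.1 (sub_nonneg.2 hx.2)) (sq_nonneg (f x))]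
  rw [integral_add (Continuous.intervalIntegrable (by fun_prop) _ _)
    (Continuous.intervalIntegrable (by fun_prop) _ _), key] at this
  linarith

/-- Poincare for the derivative -/
lemma poincare' {g h h' : ℝ → ℝ} (hg : ∀ x, HasDerivAt g (h x) x)
    (hh : ∀ x, HasDerivAt h (h' x) x) (hc : Continuous h')
    (h0 : g 0 = 0) (h1 : g 1 = 0) :
    ∫ x in (0:ℝ)..1, h x ^ 2 ≤ ∫ x in (0:ℝ)..1, h' x ^ 2 := by
  have hgc : Continuous g := continuous_iff_continuousAt.2 fun x => (hg x).continuousAt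
  have hhc : Continuous h := continuous_iff_continuousAt.2 fun x => (hh x).continuousAt
  have hp := poincare hg hhc h0 h1
  have key : ∫ x in (0:ℝ)..1, (h x * h x + g x * h' x) = 0 := by
    rw [integral_eq_sub_of_hasDerivAt (f := fun x => g x * h x)]
    · simp [h0, h1]
    · intro x _
      exact (hg x).mul (hh x)
    · exact Continuous.intervalIntegrable (by fun_prop) _ _
  have : ∫ x in (0:ℝ)..1, (2 * h x ^ 2 + (-2) * (h x * h x + g x * h' x))
      ≤ ∫ x in (0:ℝ)..1, (g x ^ 2 + h' x ^ 2) := by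
    apply integral_mono_on zero_le_one
    · exact Continuous.intervalIntegrable (by fun_prop) _ _
    · exact Continuous.intervalIntegrable (by fun_prop) _ _
    · intro x hx
      nlinarith [sq_nonneg (g x + h' x)]
  rw [integral_add (Continuous.intervalIntegrable (by fun_prop) _ _)
    (Continuous.intervalIntegrable (by fun_prop) _ _),
    integral_add (Continuous.intervalIntegrable (by fun_prop) _ _)
    (Continuous.intervalIntegrable (by fun_prop) _ _), intervalIntegral.integral_const_mul,
    intervalIntegral.integral_const_mul, key] at this
  linarith

/-- trace inequality -/
lemma trace {f f' : ℝ → ℝ} (hf : ∀ x, HasDerivAt f (f' x) x) (hc : Continuous f') :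
    f 0 ^ 2 ≤ 2 * (∫ x in (0:ℝ)..1, f x ^ 2) + ∫ x in (0:ℝ)..1, f' x ^ 2 := by
  have hfc : Continuous f := continuous_iff_continuousAt.2 fun x => (hf x).continuousAt
  have key : ∫ x in (0:ℝ)..1, ((-1) * f x ^ 2 + (1 - x) * (2 * f x * f' x)) = - f 0 ^ 2 := by
    rw [integral_eq_sub_of_hasDerivAt (f := fun x => (1 - x) * f x ^ 2)]
    · simp
    · intro x _
      have := (((hasDerivAt_id x)).const_sub 1).mul ((hf x).pow 2)
      refine this.congr_deriv ?_
      simp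
    · exact Continuous.intervalIntegrable (by fun_prop) _ _
  have : ∫ x in (0:ℝ)..1, (-1) * ((-1) * f x ^ 2 + (1 - x) * (2 * f x * f' x))
      ≤ ∫ x in (0:ℝ)..1, (2 * f x ^ 2 + f' x ^ 2) := by
    apply integral_mono_on zero_le_one
    · exact Continuous.intervalIntegrable (by fun_prop) _ _
    · exact Continuous.intervalIntegrable (by fun_prop) _ _
    · intro x hx
      have h3 : 0 ≤ (1 - (1-x)^2) * f x ^ 2 :=
        mul_nonneg (by nlinarith [hx.1, hx.2]) (sq_nonneg _)
      nlinarith [sq_nonneg ((1 - x) * f x + f' x)]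
  rw [intervalIntegral.integral_const_mul, key,
    integral_add (Continuous.intervalIntegrable (by fun_prop) _ _)
    (Continuous.intervalIntegrable (by fun_prop) _ _), intervalIntegral.integral_const_mul] at this
  linarith

/-- The heat equation for all spatial derivatives, in the interior. -/
lemma heat_int {W : ℝ → ℝ → ℝ} (h : Sm W) {q : ℝ}
    (hpde : ∀ x ∈ Ioo (0:ℝ) 1, ∀ t, 0 < t → Dt W x t = q * DD W 2 x t) (i : ℕ) :
    ∀ x ∈ Ioo (0:ℝ) 1, ∀ t, 0 < t → Dt (DD W i) x t = q * DD W (i+2) x t := by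
  induction i with
  | zero => simpa [DD_zero] using hpde
  | succ k ih =>
    intro x hx t ht
    rw [DD_succ W k, (h.DD k).comm, show k + 1 + 2 = (k + 2) + 1 by ring, DD_succ W (k+2)]
    have he : (fun s => Dt (DD W k) s t) =ᶠ[𝓝 x] fun s => q * DD W (k+2) s t := by
      filter_upwards [Ioo_mem_nhds hx.1 hx.2] with s hs using ih s hs t ht
    change deriv (fun s => Dt (DD W k) s t) x = _
    rw [he.deriv_eq]
    exact (((h.DD (k+2)).hx x t).const_mul q).deriv

lemma heat_cl {W : ℝ → ℝ → ℝ} (h : Sm W) {q : ℝ}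
    (hpde : ∀ x ∈ Ioo (0:ℝ) 1, ∀ t, 0 < t → Dt W x t = q * DD W 2 x t) (i : ℕ) :
    ∀ x ∈ Icc (0:ℝ) 1, ∀ t, 0 < t → Dt (DD W i) x t = q * DD W (i+2) x t := by
  intro x hx t ht
  have h1 : EqOn (fun s => Dt (DD W i) s t) (fun s => q * DD W (i+2) s t)
      (closure (Ioo (0:ℝ) 1)) :=
    EqOn.closure (fun s hs => heat_int h hpde i s hs t ht)
      ((h.DD i).dt.contx t) (((h.DD (i+2)).contx t).const_mul q)
  rw [closure_Ioo (by norm_num)] at h1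
  exact h1 hx

lemma heat_bc {W : ℝ → ℝ → ℝ} (h : Sm W) {q : ℝ} (hq : 0 < q)
    (hpde : ∀ x ∈ Ioo (0:ℝ) 1, ∀ t, 0 < t → Dt W x t = q * DD W 2 x t)
    {x : ℝ} (hx : x ∈ Icc (0:ℝ) 1) (hb : ∀ t, 0 < t → W x t = 0) (k : ℕ) :
    ∀ t, 0 < t → DD W (2 * k) x t = 0 := by
  induction k with
  | zero => simpa [DD_zero] using hb
  | succ k ih =>
    intro t ht
    have h1 := heat_cl h hpde (2*k) x hx t ht
    have he : (fun s => DD W (2*k) x s) =ᶠ[𝓝 t] fun _ => 0 := by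
      filter_upwards [Ioi_mem_nhds ht] with s hs using ih s hs
    have h2 : Dt (DD W (2*k)) x t = 0 := by
      change deriv (fun s => DD W (2*k) x s) t = 0
      rw [he.deriv_eq]; simp
    rw [h2] at h1
    have := (mul_eq_zero.1 h1.symm).resolve_left (ne_of_gt hq)
    exact this

/-- energies -/
noncomputable def En (W : ℝ → ℝ → ℝ) (i : ℕ) (t : ℝ) : ℝ := ∫ x in (0:ℝ)..1, DD W i x t ^ 2

lemma En_nonneg (W : ℝ → ℝ → ℝ) (i : ℕ) (t : ℝ) : 0 ≤ En W i t :=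
  integral_nonneg zero_le_one fun _ _ => sq_nonneg _

lemma Sm.sq {F : ℝ → ℝ → ℝ} (h : Sm F) : Sm (fun x t => F x t ^ 2) := by
  have : ContDiff ℝ (⊤ : ℕ∞) (fun p => Function.uncurry F p ^ 2) := ContDiff.pow h 2
  exact this

lemma En_hasDerivAt {W : ℝ → ℝ → ℝ} (h : Sm W) (i : ℕ) (t : ℝ) :
    HasDerivAt (En W i) (∫ x in (0:ℝ)..1, 2 * DD W i x t * Dt (DD W i) x t) t := by
  have h1 := ((h.DD i).sq).hasDerivAt_integral t
  refine h1.congr_deriv ?_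
  apply integral_congr
  intro x _
  have := (((h.DD i).ht x t).fun_pow 2).deriv
  simp only [Dt] at this ⊢
  simpa using this

lemma En_deriv_le {W : ℝ → ℝ → ℝ} (h : Sm W) {q : ℝ} (hq : 0 < q)
    (hpde : ∀ x ∈ Ioo (0:ℝ) 1, ∀ t, 0 < t → Dt W x t = q * DD W 2 x t)
    (hb0 : ∀ t, 0 < t → W 0 t = 0) (hb1 : ∀ t, 0 < t → W 1 t = 0) (i : ℕ) (t : ℝ) (ht : 0 < t) :
    ∃ d, HasDerivAt (En W i) d t ∧ d ≤ - (2 * q) * En W i t := by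
  refine ⟨_, En_hasDerivAt h i t, ?_⟩
  have e0 : ∀ k, DD W (2*k) 0 t = 0 := fun k =>
    heat_bc h hq hpde (by simp) hb0 k t ht
  have e1 : ∀ k, DD W (2*k) 1 t = 0 := fun k =>
    heat_bc h hq hpde (by simp) hb1 k t ht
  have hd : ∀ j x, HasDerivAt (fun s => DD W j s t) (DD W (j+1) x t) x := by
    intro j x
    rw [DD_succ]; exact (h.DD j).hx x t
  have hcc : ∀ j, Continuous (fun s => DD W j s t) := fun j => (h.DD j).contx t
  have c0 := hcc i
  have c1 := hcc (i+1)
  have c2 := hcc (i+2)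
  have hP : En W i t ≤ En W (i+1) t := by
    rcases Nat.even_or_odd' i with ⟨k, rfl | rfl⟩
    · exact poincare (hd _) c1 (e0 k) (e1 k)
    · exact poincare' (hd (2*k)) (hd _) (c1) (e0 k) (e1 k)
  have hbd : ∀ x, (∀ k, DD W (2*k) x t = 0) → DD W i x t * DD W (i+1) x t = 0 := by
    intro x hx
    rcases Nat.even_or_odd' i with ⟨k, rfl | rfl⟩
    · rw [hx k, zero_mul]
    · rw [show 2*k+1+1 = 2*(k+1) by ring, hx (k+1), mul_zero]
  have key : ∫ x in (0:ℝ)..1, (DD W (i+1) x t ^ 2 + DD W i x t * DD W (i+2) x t) = 0 := by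
    rw [integral_eq_sub_of_hasDerivAt (f := fun x => DD W i x t * DD W (i+1) x t)]
    · rw [hbd 1 e1, hbd 0 e0, sub_zero]
    · intro x _
      refine ((hd i x).mul (hd (i+1) x)).congr_deriv ?_
      ring
    · exact Continuous.intervalIntegrable (by fun_prop) _ _
  rw [integral_add (Continuous.intervalIntegrable (by fun_prop) _ _)
    (Continuous.intervalIntegrable (by fun_prop) _ _)] at key
  have h3 : ∫ x in (0:ℝ)..1, 2 * DD W i x t * Dt (DD W i) x t
      = ∫ x in (0:ℝ)..1, (2 * q) * (DD W i x t * DD W (i+2) x t) := by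
    apply integral_congr
    intro x hx
    rw [uIcc_of_le zero_le_one] at hx
    simp only
    rw [heat_cl h hpde i x hx t ht]; ring
  rw [h3, intervalIntegral.integral_const_mul]
  have h4 : ∫ x in (0:ℝ)..1, DD W i x t * DD W (i+2) x t = - En W (i+1) t := by
    unfold En; linarith
  rw [h4]
  nlinarith

lemma En_trace {W : ℝ → ℝ → ℝ} (h : Sm W) (i : ℕ) (t : ℝ) :
    DD W i 0 t ^ 2 ≤ 2 * En W i t + En W (i+1) t := by
  refine trace (f := fun s => DD W i s t) (f' := fun s => DD W (i+1) s t) ?_ ((h.DD (i+1)).contx t)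
  intro x
  rw [DD_succ]; exact (h.DD i).hx x t

section alg
variable {ι : Type*} [Fintype ι]

lemma quad_upper (P : Matrix ι ι ℝ) :
    ∃ C : ℝ, 0 < C ∧ ∀ v : ι → ℝ, v ⬝ᵥ P *ᵥ v ≤ C * ∑ i, v i ^ 2 := by
  refine ⟨∑ i, ∑ j, |P i j| + 1, by positivity, fun v => ?_⟩
  have hN : ∀ i, v i ^ 2 ≤ ∑ i, v i ^ 2 := fun i =>
    Finset.single_le_sum (f := fun i => v i ^ 2) (fun _ _ => sq_nonneg _) (Finset.mem_univ i)
  have h0 : 0 ≤ ∑ i, v i ^ 2 := Finset.sum_nonneg fun _ _ => sq_nonneg _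
  have h1 : v ⬝ᵥ P *ᵥ v ≤ ∑ i, ∑ j, |P i j| * ∑ i, v i ^ 2 := by
    simp only [dotProduct, Matrix.mulVec]
    refine Finset.sum_le_sum fun i _ => ?_
    rw [Finset.mul_sum]
    refine Finset.sum_le_sum fun j _ => ?_
    have h2 : |v i * v j| ≤ ∑ i, v i ^ 2 := by
      rw [abs_le]
      constructor <;> nlinarith [hN i, hN j, sq_nonneg (v i + v j), sq_nonneg (v i - v j)]
    calc v i * (P i j * v j) = P i j * (v i * v j) := by ring
      _ ≤ |P i j * (v i * v j)| := le_abs_self _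
      _ = |P i j| * |v i * v j| := abs_mul _ _
      _ ≤ _ := mul_le_mul_of_nonneg_left h2 (abs_nonneg _)
  simp only [← Finset.sum_mul] at h1
  linarith

lemma quad_lower {Q : Matrix ι ι ℝ} (hQ : Q.PosDef) :
    ∃ c : ℝ, 0 < c ∧ ∀ v : ι → ℝ, c * ∑ i, v i ^ 2 ≤ v ⬝ᵥ Q *ᵥ v := by
  let K : Set (ι → ℝ) := {v | ∑ i, v i ^ 2 = 1}
  have hKc : IsClosed K := isClosed_eq (by fun_prop) continuous_const
  have hKs : K ⊆ Set.pi Set.univ fun _ => Icc (-1:ℝ) 1 := by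
    intro v hv i _
    have : v i ^ 2 ≤ ∑ i, v i ^ 2 :=
      Finset.single_le_sum (f := fun i => v i ^ 2) (fun _ _ => sq_nonneg _) (Finset.mem_univ i)
    rw [show ∑ i, v i ^ 2 = 1 from hv] at this
    exact abs_le.1 (abs_le_one_iff_mul_self_le_one.2 (by nlinarith))
  have hK : IsCompact K := (isCompact_univ_pi fun _ => isCompact_Icc).of_isClosed_subset hKc hKs
  have hscale : ∀ v : ι → ℝ, ∑ i, v i ^ 2 ≠ 0 →
      ∃ r : ℝ, r ^ 2 = ∑ i, v i ^ 2 ∧ r ≠ 0 ∧ r⁻¹ • v ∈ K := by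
    intro v hv
    have hp : 0 ≤ ∑ i, v i ^ 2 := Finset.sum_nonneg fun _ _ => sq_nonneg _
    have hs := Real.sq_sqrt hp
    refine ⟨√(∑ i, v i ^ 2), hs, ?_, ?_⟩
    · intro h; rw [h] at hs; apply hv; rw [← hs]; simp
    · change ∑ i, _ = _
      simp only [Pi.smul_apply, smul_eq_mul, mul_pow, ← Finset.mul_sum]
      rw [inv_pow, hs, inv_mul_cancel₀ hv]
  rcases K.eq_empty_or_nonempty with hE | hne
  · refine ⟨1, one_pos, fun v => ?_⟩
    by_cases hv : ∑ i, v i ^ 2 = 0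
    · have : v = 0 := by
        funext i
        have := (Finset.sum_eq_zero_iff_of_nonneg (fun _ _ => sq_nonneg _)).1 hv i (Finset.mem_univ i)
        simpa using this
      subst this; simp
    · obtain ⟨r, _, _, h⟩ := hscale v hv
      rw [hE] at h; exact h.elim
  · obtain ⟨w, hw, hmin⟩ := hK.exists_isMinOn hne
      (f := fun v => v ⬝ᵥ Q *ᵥ v) (by
        apply Continuous.continuousOn
        simp only [dotProduct, Matrix.mulVec]
        fun_prop)
    have hw0 : w ≠ 0 := by
      rintro rfl
      have : ∑ i : ι, (0 : ι → ℝ) i ^ 2 = 1 := hw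
      simp at this
    have hpos := hQ.dotProduct_mulVec_pos hw0
    rw [star_trivial] at hpos
    refine ⟨_, hpos, fun v => ?_⟩
    by_cases hv : ∑ i, v i ^ 2 = 0
    · have : v = 0 := by
        funext i
        have := (Finset.sum_eq_zero_iff_of_nonneg (fun _ _ => sq_nonneg _)).1 hv i (Finset.mem_univ i)
        simpa using this
      subst this; simp
    · obtain ⟨r, hr, hr0, h⟩ := hscale v hv
      have h1 := isMinOn_iff.1 hmin _ h
      simp only [Matrix.mulVec_smul, dotProduct_smul, smul_dotProduct, smul_eq_mul] at h1
      rw [← hr]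
      have h2 := mul_le_mul_of_nonneg_left h1 (sq_nonneg r)
      have h3 : r ^ 2 * (r⁻¹ * (r⁻¹ * v ⬝ᵥ Q *ᵥ v)) = v ⬝ᵥ Q *ᵥ v := by field_simp
      linarith

lemma quad_hasDerivAt (P : Matrix ι ι ℝ) (V : ι → ℝ → ℝ) (t : ℝ) (d : ι → ℝ)
    (hV : ∀ j, HasDerivAt (V j) (d j) t) :
    HasDerivAt (fun s => (fun j => V j s) ⬝ᵥ P *ᵥ (fun j => V j s))
      (d ⬝ᵥ P *ᵥ (fun j => V j t) + (fun j => V j t) ⬝ᵥ P *ᵥ d) t := by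
  simp only [dotProduct, Matrix.mulVec]
  rw [← Finset.sum_add_distrib]
  refine HasDerivAt.fun_sum fun i _ => ?_
  refine (hV i).mul (HasDerivAt.fun_sum fun j _ => ?_)
  exact (hV j).const_mul _

lemma lyap_algebra {P Q Ab : Matrix ι ι ℝ} (hP : Pᵀ = P) (hL : P * Ab + Abᵀ * P = -Q)
    (b v : ι → ℝ) (g : ℝ) :
    (Ab *ᵥ v - g • b) ⬝ᵥ P *ᵥ v + v ⬝ᵥ P *ᵥ (Ab *ᵥ v - g • b)
      = - (v ⬝ᵥ Q *ᵥ v) - 2 * g * (v ⬝ᵥ P *ᵥ b) := by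
  have h1 : (Ab *ᵥ v) ⬝ᵥ P *ᵥ v = v ⬝ᵥ (Abᵀ * P) *ᵥ v := by
    rw [← Matrix.mulVec_mulVec, Matrix.dotProduct_mulVec v, Matrix.vecMul_transpose]
  have h2 : b ⬝ᵥ P *ᵥ v = v ⬝ᵥ P *ᵥ b := by
    rw [Matrix.dotProduct_mulVec, dotProduct_comm, ← Matrix.mulVec_transpose, hP]
  have h3 : v ⬝ᵥ Q *ᵥ v = -(v ⬝ᵥ (P * Ab) *ᵥ v + v ⬝ᵥ (Abᵀ * P) *ᵥ v) := by
    rw [← dotProduct_add, ← Matrix.add_mulVec, hL, Matrix.neg_mulVec, dotProduct_neg, neg_neg]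
  rw [sub_dotProduct, h1, smul_dotProduct, h2, Matrix.mulVec_sub, dotProduct_sub,
    Matrix.mulVec_mulVec, Matrix.mulVec_smul, dotProduct_smul, h3]
  simp only [smul_eq_mul]
  ring

lemma young (v w : ι → ℝ) (g c : ℝ) (hc : 0 < c) :
    - (2 * g * (v ⬝ᵥ w)) ≤ c / 2 * ∑ i, v i ^ 2 + (2 / c * ∑ i, w i ^ 2) * g ^ 2 := by
  simp only [dotProduct, Finset.mul_sum, Finset.sum_mul, ← Finset.sum_neg_distrib,
    ← Finset.sum_add_distrib]
  refine Finset.sum_le_sum fun i _ => ?_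
  have : 0 ≤ 2 / c * (c / 2 * v i + g * w i) ^ 2 := by positivity
  have h2 : 2 / c * (c / 2 * v i + g * w i) ^ 2
    = c / 2 * v i ^ 2 + 2 * g * (v i * w i) + 2 / c * w i ^ 2 * g ^ 2 := by field_simp; ring
  linarith

end alg

/-- Gronwall -/
lemma gronwall {L : ℝ → ℝ} (hc : Continuous L) {l : ℝ}
    (h : ∀ t, 0 < t → ∃ d, HasDerivAt L d t ∧ d ≤ - l * L t) (t : ℝ) (ht : 0 ≤ t) :
    L t ≤ L 0 * Real.exp (- l * t) := by
  have ha : AntitoneOn (fun s => Real.exp (l * s) * L s) (Ici 0) := by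
    have hd : ∀ s, 0 < s → ∃ d, HasDerivAt (fun s => Real.exp (l * s) * L s) d s ∧ d ≤ 0 := by
      intro s hs
      obtain ⟨d, h1, h2⟩ := h s hs
      refine ⟨_, (((hasDerivAt_id s).const_mul l).exp).mul h1, ?_⟩
      have := Real.exp_pos (l * s)
      simp only [id, mul_one]
      nlinarith
    apply antitoneOn_of_deriv_nonpos (convex_Ici 0)
    · exact Continuous.continuousOn (by fun_prop)
    · intro s hs
      rw [interior_Ici] at hs
      obtain ⟨d, h1, _⟩ := hd s hs
      exact h1.differentiableAt.differentiableWithinAt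
    · intro s hs
      rw [interior_Ici] at hs
      obtain ⟨d, h1, h2⟩ := hd s hs
      rw [h1.deriv]; exact h2
  have := ha (mem_Ici.2 le_rfl) (mem_Ici.2 ht) ht
  simp only [mul_zero, Real.exp_zero, one_mul] at this
  rw [neg_mul, Real.exp_neg, ← div_eq_mul_inv, le_div_iff₀ (Real.exp_pos _)]
  linarith

lemma En_add {F G : ℝ → ℝ → ℝ} (hF : Sm F) (hG : Sm G) (i : ℕ) (t : ℝ) (M : ℝ) (r : ℝ → ℝ)
    (hr : Continuous r) (hM : ∫ x in (0:ℝ)..1, r x ^ 2 ≤ M)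
    (he : ∀ x, DD F i x t = DD G i x t + r x) :
    En F i t ≤ 2 * En G i t + 2 * M := by
  have c0 := (hF.DD i).contx t
  have c1 := (hG.DD i).contx t
  have : En F i t ≤ ∫ x in (0:ℝ)..1, (2 * DD G i x t ^ 2 + 2 * r x ^ 2) := by
    apply integral_mono_on zero_le_one
    · exact Continuous.intervalIntegrable (by fun_prop) _ _
    · exact Continuous.intervalIntegrable (by fun_prop) _ _
    · intro x hx
      rw [he]; nlinarith [sq_nonneg (DD G i x t - r x)]
  rw [integral_add (Continuous.intervalIntegrable (by fun_prop) _ _)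
    (Continuous.intervalIntegrable (by fun_prop) _ _), intervalIntegral.integral_const_mul,
    intervalIntegral.integral_const_mul] at this
  unfold En at *
  linarith

section core
variable {ι : Type*} [Fintype ι]

/-- the correction term -/
noncomputable def cor (k : ι → ℝ → ℝ) (V : ι → ℝ → ℝ) : ℝ → ℝ → ℝ :=
  fun x t => ∑ j, k j x * V j t

lemma cor_sm {k V : ι → ℝ → ℝ} (hk : ∀ j, ContDiff ℝ (⊤ : ℕ∞) (k j))
    (hV : ∀ j, ContDiff ℝ (⊤ : ℕ∞) (V j)) : Sm (cor k V) := by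
  have : ContDiff ℝ (⊤ : ℕ∞) (fun p : ℝ × ℝ => ∑ j, k j p.1 * V j p.2) :=
    ContDiff.sum fun j _ => ((hk j).comp contDiff_fst).mul ((hV j).comp contDiff_snd)
  exact this

lemma Sm.add {F G : ℝ → ℝ → ℝ} (hF : Sm F) (hG : Sm G) : Sm (fun x t => F x t + G x t) := by
  have : ContDiff ℝ (⊤ : ℕ∞) (fun p => Function.uncurry F p + Function.uncurry G p) :=
    ContDiff.add hF hG
  exact this

lemma DD_add {F G : ℝ → ℝ → ℝ} (hF : Sm F) (hG : Sm G) (i : ℕ) (x t : ℝ) :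
    DD (fun x t => F x t + G x t) i x t = DD F i x t + DD G i x t := by
  induction i generalizing x with
  | zero => simp [DD_zero]
  | succ i ih =>
    simp only [DD_succ]
    have : (fun s => DD (fun x t => F x t + G x t) i s t)
        = fun s => DD F i s t + DD G i s t := funext ih
    change deriv (fun s => DD (fun x t => F x t + G x t) i s t) x = _
    rw [this]
    exact (((hF.DD i).hx x t).add ((hG.DD i).hx x t)).deriv

lemma DD_cor {k V : ι → ℝ → ℝ} (hk : ∀ j, ContDiff ℝ (⊤ : ℕ∞) (k j)) (i : ℕ) (x t : ℝ) :
    DD (cor k V) i x t = ∑ j, iteratedDeriv i (k j) x * V j t := by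
  induction i generalizing x with
  | zero => simp [DD_zero, cor]
  | succ i ih =>
    simp only [DD_succ]
    change deriv (fun s => DD (cor k V) i s t) x = _
    rw [show (fun s => DD (cor k V) i s t) = fun s => ∑ j, iteratedDeriv i (k j) s * V j t
      from funext ih]
    refine HasDerivAt.deriv (HasDerivAt.fun_sum fun j _ => ?_)
    refine HasDerivAt.mul_const ?_ _
    rw [iteratedDeriv_succ]
    exact ((hk j).differentiable_iteratedDeriv i
      (by exact_mod_cast WithTop.coe_lt_top i)).differentiableAt.hasDerivAt

lemma cor_bound {k : ι → ℝ → ℝ} (hk : ∀ j, ContDiff ℝ (⊤ : ℕ∞) (k j)) (i : ℕ) (v : ι → ℝ) :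
    ∫ x in (0:ℝ)..1, (∑ j, iteratedDeriv i (k j) x * v j) ^ 2
      ≤ (∫ x in (0:ℝ)..1, ∑ j, iteratedDeriv i (k j) x ^ 2) * ∑ j, v j ^ 2 := by
  have hc : ∀ j, Continuous (iteratedDeriv i (k j)) := fun j =>
    (hk j).continuous_iteratedDeriv i (by exact_mod_cast le_top)
  rw [← intervalIntegral.integral_mul_const]
  apply integral_mono_on zero_le_one
  · exact Continuous.intervalIntegrable (by fun_prop) _ _
  · exact Continuous.intervalIntegrable (by fun_prop) _ _
  · intro x _
    exact Finset.sum_mul_sq_le_sq_mul_sq _ _ _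

theorem core (m : ℕ) (hm : 1 ≤ m) (q : ℝ) (hq : 0 < q)
    (B : Matrix ι ι ℝ) (b : ι → ℝ) (k : ι → ℝ → ℝ)
    (hk : ∀ j, ContDiff ℝ (⊤ : ℕ∞) (k j))
    (hk2 : ∀ j x, q * iteratedDeriv 2 (k j) x = ∑ i, k i x * B i j)
    (P Q : Matrix ι ι ℝ) (hP : P.PosDef) (hQ : Q.PosDef) (Ab : Matrix ι ι ℝ)
    (hAb : Ab = B + Matrix.vecMulVec b (fun j => deriv (k j) 0))
    (hL : P * Ab + Abᵀ * P = -Q) :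
    ∃ κ l : ℝ, 0 < κ ∧ 0 < l ∧ ∀ (u : ℝ → ℝ → ℝ) (V : ι → ℝ → ℝ), Sm u →
      (∀ j, ContDiff ℝ (⊤ : ℕ∞) (V j)) →
      (∀ t, 0 ≤ t → ∀ j, deriv (V j) t = (∑ i, B j i * V i t) - DD u 1 0 t * b j) →
      (∀ x ∈ Icc (0:ℝ) 1, ∀ t, 0 ≤ t →
        Dt u x t = q * DD u 2 x t + (∑ j, k j x * b j) * DD u 1 0 t) →
      (∀ t, 0 ≤ t → u 0 t + ∑ j, k j 0 * V j t = 0) →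
      (∀ t, 0 ≤ t → u 1 t + ∑ j, k j 1 * V j t = 0) →
      ∀ t, 0 ≤ t → (∑ i ∈ Finset.range (2*m+1), En u i t) + ∑ j, V j t ^ 2
        ≤ κ * ((∑ i ∈ Finset.range (2*m+1), En u i 0) + ∑ j, V j 0 ^ 2) * Real.exp (- l * t) := by
  obtain ⟨c1, hc1, hP1⟩ := quad_lower hP
  obtain ⟨c2, hc2, hQ2⟩ := quad_lower hQ
  obtain ⟨C, hC, hPC⟩ := quad_upper P
  have hPs : P.IsSymm := by simpa using hP.isHermitian
  have hPt : Pᵀ = P := hPs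
  set K : ℝ := 2 / c2 * ∑ i, (P *ᵥ b) i ^ 2 with hK
  have hK0 : 0 ≤ K := mul_nonneg (by positivity) (Finset.sum_nonneg fun _ _ => sq_nonneg _)
  set R : ℝ := (2 * K + 1) / q with hR
  have hR0 : 0 < R := by positivity
  have hqR : q * R = 2 * K + 1 := by rw [hR]; field_simp
  set l : ℝ := min (c2 / (2 * C)) q with hl
  have hl0 : 0 < l := lt_min (by positivity) hq
  set M : ℕ → ℝ := fun i => ∫ x in (0:ℝ)..1, ∑ j, iteratedDeriv i (k j) x ^ 2 with hM
  have hM0 : ∀ i, 0 ≤ M i := fun i =>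
    integral_nonneg zero_le_one fun x _ => Finset.sum_nonneg fun _ _ => sq_nonneg _
  set MM : ℝ := ∑ i ∈ Finset.range (2*m+1), M i with hMM
  have hMM0 : 0 ≤ MM := Finset.sum_nonneg fun i _ => hM0 i
  refine ⟨(2 / R + (2 * MM + 1) / c1) * (C + R * (2 + 2 * MM)), l, by positivity, hl0, ?_⟩
  intro u V hu hV hVd hpde hb0 hb1 t ht
  set W : ℝ → ℝ → ℝ := fun x t => u x t + cor k V x t with hW
  have hcs : Sm (cor k V) := cor_sm hk hV
  have hWs : Sm W := hu.add hcs
  have hWD : ∀ i x t, DD W i x t = DD u i x t + ∑ j, iteratedDeriv i (k j) x * V j t := by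
    intro i x t
    rw [hW, DD_add hu hcs, DD_cor hk]
  have hVh : ∀ t, 0 ≤ t → ∀ j,
      HasDerivAt (V j) ((∑ i, B j i * V i t) - DD u 1 0 t * b j) t := by
    intro t ht j
    rw [← hVd t ht j]
    exact ((hV j).differentiable (by simp)).differentiableAt.hasDerivAt
  have hheat : ∀ x ∈ Ioo (0:ℝ) 1, ∀ t, 0 < t → Dt W x t = q * DD W 2 x t := by
    intro x hx t ht
    have h1 : HasDerivAt (fun s => W x s) (Dt u x t
        + ∑ j, k j x * ((∑ i, B j i * V i t) - DD u 1 0 t * b j)) t :=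
      (hu.ht x t).add (HasDerivAt.fun_sum fun j _ => (hVh t ht.le j).const_mul _)
    rw [show Dt W x t = _ from h1.deriv, hWD, hpde x ⟨hx.1.le, hx.2.le⟩ t ht.le]
    have h2 : q * ∑ j, iteratedDeriv 2 (k j) x * V j t = ∑ j, k j x * ∑ i, B j i * V i t := by
      simp only [Finset.mul_sum, ← mul_assoc, hk2, Finset.sum_mul]
      rw [Finset.sum_comm]
    rw [mul_add, h2]
    simp only [mul_sub, Finset.sum_sub_distrib, Finset.sum_mul]
    have h3 : ∑ j, k j x * (DD u 1 0 t * b j) = ∑ j, k j x * b j * DD u 1 0 t :=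
      Finset.sum_congr rfl fun j _ => by ring
    rw [h3]; ring
  have hw0 : ∀ t, 0 < t → W 0 t = 0 := fun t ht => hb0 t ht.le
  have hw1 : ∀ t, 0 < t → W 1 t = 0 := fun t ht => hb1 t ht.le
  set v : ℝ → ι → ℝ := fun t j => V j t with hv
  set N : ℝ → ℝ := fun t => ∑ j, V j t ^ 2 with hN
  have hN0 : ∀ t, 0 ≤ N t := fun t => Finset.sum_nonneg fun _ _ => sq_nonneg _
  set S : ℝ → ℝ := fun t => v t ⬝ᵥ P *ᵥ v t with hS
  set T : ℝ → ℝ := fun t => ∑ i ∈ Finset.range (2*m+1), En W i t with hT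
  set U : ℝ → ℝ := fun t => ∑ i ∈ Finset.range (2*m+1), En u i t with hU
  have hT0 : ∀ t, 0 ≤ T t := fun t => Finset.sum_nonneg fun i _ => En_nonneg _ _ _
  have hU0 : ∀ t, 0 ≤ U t := fun t => Finset.sum_nonneg fun i _ => En_nonneg _ _ _
  have hS1 : ∀ t, c1 * N t ≤ S t := fun t => hP1 (v t)
  have hS2 : ∀ t, S t ≤ C * N t := fun t => hPC (v t)
  have hSd : ∀ t, 0 < t → ∃ d, HasDerivAt S d t ∧ d ≤ - (c2 / 2) * N t + 2 * K * T t := by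
    intro t ht
    refine ⟨_, quad_hasDerivAt P V t _ (hVh t ht.le), ?_⟩
    have e : (fun j => (∑ i, B j i * V i t) - DD u 1 0 t * b j)
        = Ab *ᵥ v t - (DD W 1 0 t) • b := by
      funext j
      rw [hAb, Matrix.add_mulVec, Matrix.vecMulVec_mulVec, hWD]
      simp only [Pi.sub_apply, Pi.add_apply, Pi.smul_apply, Matrix.mulVec, dotProduct,
        smul_eq_mul, iteratedDeriv_one, MulOpposite.smul_eq_mul_unop, MulOpposite.unop_op, hv]
      ring
    rw [e, show (fun j => V j t) = v t from rfl, lyap_algebra hPt hL]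
    have h1 := young (v t) (P *ᵥ b) (DD W 1 0 t) c2 hc2
    have h2 := hQ2 (v t)
    have h3 := En_trace hWs 1 t
    have h4 : En W 1 t + En W 2 t ≤ T t := by
      have : ∑ i ∈ ({1, 2} : Finset ℕ), En W i t ≤ T t :=
        Finset.sum_le_sum_of_subset_of_nonneg (by
          intro i hi
          simp only [Finset.mem_insert, Finset.mem_singleton, Finset.mem_range] at *
          omega) fun i _ _ => En_nonneg _ _ _
      simpa using this
    have h5 : K * DD W 1 0 t ^ 2 ≤ K * (2 * T t) :=
      mul_le_mul_of_nonneg_left (by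
        have := En_nonneg W 2 t
        have h6 : En W (1+1) t = En W 2 t := rfl
        linarith) hK0
    have h7 : ∑ i, v t i ^ 2 = N t := rfl
    rw [h7] at h1 h2
    rw [← hK] at h1
    linarith
  have hTd : ∀ t, 0 < t → ∃ d, HasDerivAt T d t ∧ d ≤ - (2 * q) * T t := by
    intro t ht
    choose d hd1 hd2 using fun i => En_deriv_le hWs hq hheat hw0 hw1 i t ht
    refine ⟨∑ i ∈ Finset.range (2*m+1), d i, HasDerivAt.fun_sum fun i _ => hd1 i, ?_⟩
    rw [hT, Finset.mul_sum]
    exact Finset.sum_le_sum fun i _ => hd2 i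
  have hEc : ∀ i, Continuous (En W i) := fun i =>
    continuous_iff_continuousAt.2 fun t => (En_hasDerivAt hWs i t).continuousAt
  have hTc : Continuous T := continuous_finsetSum _ fun i _ => hEc i
  have hSc : Continuous S := by
    have hVc : ∀ j, Continuous (V j) := fun j => (hV j).continuous
    simp only [hS, hv, dotProduct, Matrix.mulVec]
    fun_prop
  have hg := gronwall (L := fun t => S t + R * T t) (by fun_prop) (l := l) (by
    intro t ht
    obtain ⟨d1, h1, h2⟩ := hSd t ht
    obtain ⟨d2, h3, h4⟩ := hTd t ht
    refine ⟨_, h1.add (h3.const_mul R), ?_⟩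
    have a1 : l * S t ≤ c2 / 2 * N t := by
      calc l * S t ≤ l * (C * N t) := mul_le_mul_of_nonneg_left (hS2 t) hl0.le
        _ ≤ c2 / (2 * C) * (C * N t) :=
          mul_le_mul_of_nonneg_right (min_le_left _ _) (mul_nonneg hC.le (hN0 t))
        _ = c2 / 2 * N t := by field_simp
    have a2 : l * (R * T t) ≤ q * (R * T t) :=
      mul_le_mul_of_nonneg_right (min_le_right _ _) (mul_nonneg hR0.le (hT0 t))
    have a3 : R * d2 ≤ R * (- (2 * q) * T t) := mul_le_mul_of_nonneg_left h4 hR0.le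
    have a4 : q * (R * T t) = (2 * K + 1) * T t := by rw [← mul_assoc, hqR]
    have a5 : R * (- (2 * q) * T t) = - 2 * (q * (R * T t)) := by ring
    have := hT0 t
    linarith) t ht
  have hUT : ∀ t, U t ≤ 2 * T t + 2 * MM * N t := by
    intro t
    have : U t ≤ ∑ i ∈ Finset.range (2*m+1), (2 * En W i t + 2 * (M i * N t)) := by
      refine Finset.sum_le_sum fun i _ => ?_
      have hc : ∀ j, Continuous (iteratedDeriv i (k j)) := fun j =>
        (hk j).continuous_iteratedDeriv i (by exact_mod_cast le_top)
      refine En_add hu hWs i t _ (fun x => - ∑ j, iteratedDeriv i (k j) x * V j t)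
        (by fun_prop) ?_ fun x => by rw [hWD]; ring
      simp only [neg_sq]
      exact cor_bound hk i (v t)
    rw [Finset.sum_add_distrib, ← Finset.mul_sum, ← Finset.mul_sum, ← Finset.sum_mul] at this
    linarith
  have hTU : ∀ t, T t ≤ 2 * U t + 2 * MM * N t := by
    intro t
    have : T t ≤ ∑ i ∈ Finset.range (2*m+1), (2 * En u i t + 2 * (M i * N t)) := by
      refine Finset.sum_le_sum fun i _ => ?_
      have hc : ∀ j, Continuous (iteratedDeriv i (k j)) := fun j =>
        (hk j).continuous_iteratedDeriv i (by exact_mod_cast le_top)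
      refine En_add hWs hu i t _ (fun x => ∑ j, iteratedDeriv i (k j) x * V j t)
        (by fun_prop) ?_ fun x => hWD i x t
      exact cor_bound hk i (v t)
    rw [Finset.sum_add_distrib, ← Finset.mul_sum, ← Finset.mul_sum, ← Finset.sum_mul] at this
    linarith
  have f1 : U t + N t ≤ (2 / R + (2 * MM + 1) / c1) * (S t + R * T t) := by
    have b1 : 2 * T t = 2 / R * (R * T t) := by field_simp
    have b2 : (2 * MM + 1) * N t ≤ (2 * MM + 1) / c1 * S t := by
      calc (2 * MM + 1) * N t = (2 * MM + 1) / c1 * (c1 * N t) := by field_simp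
        _ ≤ _ := mul_le_mul_of_nonneg_left (hS1 t) (by positivity)
    have b3 : 0 ≤ 2 / R * S t :=
      mul_nonneg (by positivity) ((mul_nonneg hc1.le (hN0 t)).trans (hS1 t))
    have b4 : 0 ≤ (2 * MM + 1) / c1 * (R * T t) :=
      mul_nonneg (by positivity) (mul_nonneg hR0.le (hT0 t))
    have := hUT t
    linarith
  have f2 : S 0 + R * T 0 ≤ (C + R * (2 + 2 * MM)) * (U 0 + N 0) := by
    have b1 := hS2 0
    have b2 := mul_le_mul_of_nonneg_left (hTU 0) hR0.le
    have b3 : 0 ≤ C * U 0 := mul_nonneg hC.le (hU0 0)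
    have b4 : 0 ≤ R * (2 * MM) * U 0 := mul_nonneg (by positivity) (hU0 0)
    have b5 : 0 ≤ R * 2 * N 0 := mul_nonneg (by positivity) (hN0 0)
    linarith
  calc U t + N t ≤ (2 / R + (2 * MM + 1) / c1) * (S t + R * T t) := f1
    _ ≤ (2 / R + (2 * MM + 1) / c1) * ((S 0 + R * T 0) * Real.exp (-l * t)) :=
      mul_le_mul_of_nonneg_left hg (by positivity)
    _ ≤ (2 / R + (2 * MM + 1) / c1) *
        (((C + R * (2 + 2 * MM)) * (U 0 + N 0)) * Real.exp (-l * t)) :=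
      mul_le_mul_of_nonneg_left (mul_le_mul_of_nonneg_right f2 (Real.exp_pos _).le) (by positivity)
    _ = _ := by ring

end core

end Obs

/-- exponential convergence of the observer error system. -/
theorem stmt11
    (n m : ℕ) (hn : 1 ≤ n) (hm : 1 ≤ m)
    (q : ℝ) (hq : 0 < q)
    (A : Matrix (Fin n) (Fin n) ℝ) (Az : Matrix (Fin m) (Fin m) ℝ)
    (CX : Fin n → ℝ) (Cz : Fin m → ℝ)
    (P₀ : Fin n → ℝ) (P₂ : Fin m → ℝ)
    (ϑ : ℝ → Fin m → ℝ) (hϑsm : ContDiff ℝ (⊤ : ℕ∞) ϑ)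
    (hϑode : ∀ x : ℝ, q • deriv (deriv ϑ) x = ϑ x ᵥ* Az)
    (hϑ0 : ϑ 0 = 0) (hϑ1 : ϑ 1 = -Cz)
    (θ : ℝ → Fin n → ℝ) (hθsm : ContDiff ℝ (⊤ : ℕ∞) θ)
    (hθode : ∀ x : ℝ, q • deriv (deriv θ) x = θ x ᵥ* A)
    (hθ0 : θ 0 = -CX) (hθ1 : θ 1 = 0)
    (p₁ : ℝ → ℝ) (hp₁ : ∀ x : ℝ, p₁ x = -(ϑ x ⬝ᵥ P₂) - θ x ⬝ᵥ P₀)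
    -- the matrix Ā and its Lyapunov certificate
    (Abar : Matrix (Fin m ⊕ Fin n) (Fin m ⊕ Fin n) ℝ)
    (hAbar : Abar = Matrix.fromBlocks Az 0 0 A
      + Matrix.vecMulVec (Sum.elim P₂ P₀) (Sum.elim (deriv ϑ 0) (deriv θ 0)))
    (Pbar Qbar : Matrix (Fin m ⊕ Fin n) (Fin m ⊕ Fin n) ℝ)
    (hPbar : Pbar.PosDef) (hQbar : Qbar.PosDef)
    (hLyap : Pbar * Abar + Abarᵀ * Pbar = -Qbar) :
    ∃ Υe lame : ℝ, 0 < Υe ∧ 0 < lame ∧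
      ∀ (tu : ℝ → ℝ → ℝ) (tX : ℝ → Fin n → ℝ) (tZ : ℝ → Fin m → ℝ),
        ContDiff ℝ (⊤ : ℕ∞) (Function.uncurry tu) →
        ContDiff ℝ (⊤ : ℕ∞) tX → ContDiff ℝ (⊤ : ℕ∞) tZ →
        (∀ t : ℝ, 0 ≤ t →
          deriv tX t = A.mulVec (tX t) - (deriv (fun s => tu s t) 0) • P₀) →
        (∀ x ∈ Icc (0:ℝ) 1, ∀ t : ℝ, 0 ≤ t →
          deriv (fun s => tu x s) t =
            q * iteratedDeriv 2 (fun s => tu s t) x - p₁ x * deriv (fun s => tu s t) 0) →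
        (∀ t : ℝ, 0 ≤ t → tu 0 t = CX ⬝ᵥ tX t) →
        (∀ t : ℝ, 0 ≤ t → tu 1 t = Cz ⬝ᵥ tZ t) →
        (∀ t : ℝ, 0 ≤ t →
          deriv tZ t = Az.mulVec (tZ t) - (deriv (fun s => tu s t) 0) • P₂) →
        ∀ t : ℝ, 0 ≤ t →
          Real.sqrt (ThetaESq n m tu tX tZ t)
            ≤ Υe * Real.sqrt (ThetaESq n m tu tX tZ 0 + (deriv (fun s => tu s 0) 0) ^ 2)
              * Real.exp (-lame * t) := by
  classical
  have hdp : ∀ {p : ℕ} (f : ℝ → Fin p → ℝ), ContDiff ℝ (⊤ : ℕ∞) f → ∀ (x : ℝ) (j : Fin p),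
      deriv (fun s => f s j) x = deriv f x j := by
    intro p f hf x j
    have h1 : HasDerivAt f (deriv f x) x :=
      (hf.differentiable (by simp)).differentiableAt.hasDerivAt
    exact (hasDerivAt_pi.1 h1 j).deriv
  have hsm' : ∀ {p : ℕ} (f : ℝ → Fin p → ℝ), ContDiff ℝ (⊤ : ℕ∞) f →
      ContDiff ℝ (⊤ : ℕ∞) (deriv f) := by
    intro p f hf
    have := hf.iterate_deriv 1
    simpa using this
  have hdp2 : ∀ {p : ℕ} (f : ℝ → Fin p → ℝ), ContDiff ℝ (⊤ : ℕ∞) f → ∀ (x : ℝ) (j : Fin p),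
      iteratedDeriv 2 (fun s => f s j) x = deriv (deriv f) x j := by
    intro p f hf x j
    rw [iteratedDeriv_succ, iteratedDeriv_one,
      show deriv (fun s => f s j) = fun s => deriv f s j from funext fun s => hdp f hf s j]
    exact hdp _ (hsm' f hf) x j
  obtain ⟨κ, l, hκ, hl, H⟩ := Obs.core m hm q hq (Matrix.fromBlocks Az 0 0 A)
    (Sum.elim P₂ P₀) (Sum.elim (fun j x => ϑ x j) (fun j x => θ x j))
    (by
      rintro (j | j)
      · exact contDiff_pi.1 hϑsm j
      · exact contDiff_pi.1 hθsm j)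
    (by
      rintro (j | j) x
      · have := congrFun (hϑode x) j
        simp only [Pi.smul_apply, smul_eq_mul, Matrix.vecMul, dotProduct] at this
        simp [hdp2 ϑ hϑsm, this]
      · have := congrFun (hθode x) j
        simp only [Pi.smul_apply, smul_eq_mul, Matrix.vecMul, dotProduct] at this
        simp [hdp2 θ hθsm, this])
    Pbar Qbar hPbar hQbar Abar
    (by
      rw [hAbar]
      congr 2
      funext j
      rcases j with j | j
      · exact (hdp ϑ hϑsm 0 j).symm
      · exact (hdp θ hθsm 0 j).symm) hLyap
  refine ⟨√κ, l / 2, Real.sqrt_pos.2 hκ, half_pos hl, ?_⟩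
  intro tu tX tZ hu hX hZ hXd hpde hb0 hb1 hZd t ht
  have hTh : ∀ t, ThetaESq n m tu tX tZ t = (∑ i ∈ Finset.range (2*m+1), Obs.En tu i t)
      + ∑ j, (Sum.elim (fun j s => tZ s j) (fun j s => tX s j) : Fin m ⊕ Fin n → ℝ → ℝ) j t ^ 2 := by
    intro t
    simp only [ThetaESq, Obs.En, Obs.DD, Fintype.sum_sum_type, Sum.elim_inl, Sum.elim_inr]
    ring
  have hux : ∀ t, Obs.DD tu 1 0 t = deriv (fun s => tu s t) 0 := by
    intro t
    simp [Obs.DD]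
  have key := H tu (Sum.elim (fun j s => tZ s j) (fun j s => tX s j)) hu
    (by
      rintro (j | j)
      · exact contDiff_pi.1 hZ j
      · exact contDiff_pi.1 hX j)
    (by
      rintro t ht (j | j)
      · have := congrFun (hZd t ht) j
        rw [← hdp tZ hZ] at this
        simp [hux, this, Matrix.mulVec, dotProduct]
      · have := congrFun (hXd t ht) j
        rw [← hdp tX hX] at this
        simp [hux, this, Matrix.mulVec, dotProduct])
    (by
      intro x hx t ht
      have := hpde x hx t ht
      rw [hux, Obs.Dt, this, hp₁]
      simp only [Obs.DD, Fintype.sum_sum_type, Sum.elim_inl, Sum.elim_inr, dotProduct]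
      ring)
    (by
      intro t ht
      rw [hb0 t ht]
      simp [hϑ0, hθ0, dotProduct])
    (by
      intro t ht
      rw [hb1 t ht]
      simp [hϑ1, hθ1, dotProduct])
    t ht
  rw [← hTh, ← hTh] at key
  have hT0 : 0 ≤ ThetaESq n m tu tX tZ 0 := by
    rw [hTh]
    exact add_nonneg (Finset.sum_nonneg fun i _ => Obs.En_nonneg _ _ _)
      (Finset.sum_nonneg fun _ _ => sq_nonneg _)
  have hexp : √(Real.exp (-l * t)) = Real.exp (-(l / 2) * t) := by
    rw [Real.sqrt_eq_iff_mul_self_eq (Real.exp_pos _).le (Real.exp_pos _).le, ← Real.exp_add]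
    congr 1; ring
  calc √(ThetaESq n m tu tX tZ t)
      ≤ √(κ * (ThetaESq n m tu tX tZ 0 + (deriv (fun s => tu s 0) 0) ^ 2) * Real.exp (-l * t)) := by
        apply Real.sqrt_le_sqrt
        refine key.trans ?_
        have := sq_nonneg (deriv (fun s => tu s 0) 0)
        gcongr
        linarith
    _ = _ := by
        rw [Real.sqrt_mul (mul_nonneg hκ.le (add_nonneg hT0 (sq_nonneg _))), Real.sqrt_mul hκ.le, hexp]
end
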